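/- Let Γ be a non-elementary hyperbolic group and μ a symmetric probability measure on Γ whose support generates Γ and which has an exponential moment (there is λ>0 with Σ_γ e^{λ d_w(e,γ)} μ(γ) < ∞ for a word metric d_w). Then the Green metric d_G belongs to D(Γ) (i.e. is hyperbolic and quasi-isometric to a word metric) if and only if for every r ≥ 0 there exists a constant C(r) such that F(x,y) ≤ C(r) F(x,v) F(v,y) whenever x, y, v are vertices of a locally finite Cayley graph of Γ and v lies at distance at most r from a geodesic segment between x and y. -/

import Mathlib

open Filter MeasureTheory Topology Metric Set
open scoped ENNReal

noncomputable section

namespace GHM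

/-! ### Coarse geometry of distance functions -/

/-- The Gromov product `(x|y)_w` of `x` and `y` seen from `w`, for a distance function `d`. -/
def gromov {X : Type*} (d : X → X → ℝ) (w x y : X) : ℝ :=
  (d x w + d y w - d x y) / 2

/-- `d` is `δ`-hyperbolic (four point condition on Gromov products). -/
def IsHyperbolicWith {X : Type*} (d : X → X → ℝ) (δ : ℝ) : Prop :=
  ∀ w x y z : X, min (gromov d w x y) (gromov d w x z) - δ ≤ gromov d w y z

/-- `d` is Gromov hyperbolic. -/
def IsHyperbolic {X : Type*} (d : X → X → ℝ) : Prop :=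
  ∃ δ : ℝ, 0 ≤ δ ∧ IsHyperbolicWith d δ

/-- `d` is a genuine metric. -/
structure IsMetricFun {X : Type*} (d : X → X → ℝ) : Prop where
  refl : ∀ x, d x x = 0
  pos : ∀ x y, x ≠ y → 0 < d x y
  symm : ∀ x y, d x y = d y x
  triangle : ∀ x y z, d x z ≤ d x y + d y z

/-- `f` is a `(Λ,c)`-quasi-isometric embedding from `(X,dX)` to `(Y,dY)`. -/
def QIEmbed {X Y : Type*} (dX : X → X → ℝ) (dY : Y → Y → ℝ)
    (f : X → Y) (Λ c : ℝ) : Prop :=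
  ∀ x x' : X, dX x x' / Λ - c ≤ dY (f x) (f x') ∧ dY (f x) (f x') ≤ Λ * dX x x' + c

/-- `(X,dX)` and `(Y,dY)` are quasi-isometric. -/
def QuasiIsometric {X Y : Type*} (dX : X → X → ℝ) (dY : Y → Y → ℝ) : Prop :=
  ∃ (f : X → Y) (Λ c C : ℝ), 1 ≤ Λ ∧ 0 ≤ c ∧ 0 ≤ C ∧
    QIEmbed dX dY f Λ c ∧ ∀ y : Y, ∃ x : X, dY (f x) y ≤ C

variable {G : Type*} [Group G]

/-- Word length of `g` with respect to the (symmetrized) finite set `S`. -/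
def wordLength (S : Finset G) (g : G) : ℕ :=
  sInf {n : ℕ | ∃ l : List G, l.length = n ∧ (∀ a ∈ l, a ∈ S ∨ a⁻¹ ∈ S) ∧ l.prod = g}

/-- The word metric associated with a finite generating set `S`. -/
def wordDist (S : Finset G) (x y : G) : ℝ := wordLength S (x⁻¹ * y)

/-- `S` generates the group. -/
def Generates (S : Finset G) : Prop := Subgroup.closure (S : Set G) = ⊤

/-- The standard metric on `ℤ`. -/
def intDist (m n : ℤ) : ℝ := |(m : ℝ) - (n : ℝ)|

/-- `G` is a non-elementary hyperbolic group: finitely generated, its word metrics are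
Gromov hyperbolic, it is infinite, and it is not quasi-isometric to `ℤ`. -/
def NonElemHyperbolic (G : Type*) [Group G] : Prop :=
  Infinite G ∧ (∃ S : Finset G, Generates S) ∧
    ∀ S : Finset G, Generates S →
      IsHyperbolic (wordDist S) ∧ ¬ QuasiIsometric (wordDist S) intDist

/-- `d` is invariant under left translations. -/
def LeftInvariant (d : G → G → ℝ) : Prop := ∀ g x y : G, d (g * x) (g * y) = d x y

/-- `d` belongs to the class `𝒟(Γ)`: it is a left-invariant Gromov hyperbolic metric on the
group, quasi-isometric to a word metric of a finite generating set. -/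
def MemD (d : G → G → ℝ) : Prop :=
  IsMetricFun d ∧ LeftInvariant d ∧ IsHyperbolic d ∧
    ∃ S : Finset G, Generates S ∧ QuasiIsometric d (wordDist S)

/-! ### Random walks -/

/-- `μ` is (the density of) a probability measure on the (countable) group. -/
def IsProbDensity (μ : G → ℝ) : Prop := (∀ g, 0 ≤ μ g) ∧ HasSum μ 1

/-- `μ` is symmetric. -/
def IsSymmetric (μ : G → ℝ) : Prop := ∀ g : G, μ g⁻¹ = μ g

/-- The support of `μ` generates `G`. -/
def GeneratesSupp (μ : G → ℝ) : Prop := Subgroup.closure {g : G | μ g ≠ 0} = ⊤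

open scoped Classical in
/-- Convolution powers `μ^n` of `μ`. -/
def convPow (μ : G → ℝ) : ℕ → G → ℝ
  | 0 => fun g => if g = 1 then 1 else 0
  | n + 1 => fun g => ∑' y : G, convPow μ n y * μ (y⁻¹ * g)

/-- The Green function `G(x,y) = ∑_n μ^n(x⁻¹y)`. -/
def greenFn (μ : G → ℝ) (x y : G) : ℝ := ∑' n : ℕ, convPow μ n (x⁻¹ * y)

/-- The random walk is transient, i.e. `G(e,e) = ∑_n μ^n(e) < ∞`. -/
def Transient (μ : G → ℝ) : Prop := Summable fun n : ℕ => convPow μ n (1 : G)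

/-- Successive positions of a walk started at `x` with increments `l`. -/
def walkPositions (x : G) (l : List G) : List G := l.scanl (fun p a => p * a) x

/-- The increments `l` describe a trajectory from `x` which hits `y` for the first time at
its final position. -/
def IsFirstHitPath (x y : G) (l : List G) : Prop :=
  (walkPositions x l).getLast? = some y ∧ y ∉ (walkPositions x l).dropLast

/-- `F(x,y)`: the probability that the `μ`-random walk started at `x` ever hits `y`. -/
def hitProb (μ : G → ℝ) (x y : G) : ℝ :=
  ∑' l : {l : List G // IsFirstHitPath x y l}, ((l : List G).map μ).prod

/-- The Green metric `d_G(x,y) = - log F(x,y)`. -/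
def greenDist (μ : G → ℝ) (x y : G) : ℝ := - Real.log (hitProb μ x y)

/-- `μ` has a finite first moment with respect to `d`. -/
def FiniteFirstMoment (d : G → G → ℝ) (μ : G → ℝ) : Prop :=
  Summable fun g : G => d 1 g * μ g

/-- `μ` has an exponential moment with respect to `d`. -/
def HasExpMoment (d : G → G → ℝ) (μ : G → ℝ) : Prop :=
  ∃ lam : ℝ, 0 < lam ∧ Summable fun g : G => Real.exp (lam * d 1 g) * μ g

/-- The entropy `H(μ^n) = -∑_γ μ^n(γ) log μ^n(γ)` of the `n`-th convolution power. -/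
def entropyAt (μ : G → ℝ) (n : ℕ) : ℝ :=
  - ∑' g : G, convPow μ n g * Real.log (convPow μ n g)

/-- `h` is the asymptotic entropy of the walk. -/
def HasEntropy (μ : G → ℝ) (h : ℝ) : Prop :=
  Tendsto (fun n : ℕ => entropyAt μ n / n) atTop (𝓝 h)

/-- `v` is the logarithmic volume growth of `(G,d)` (seen from the identity). -/
def HasGrowth (d : G → G → ℝ) (v : ℝ) : Prop :=
  Filter.limsup (fun R : ℝ => Real.log (Nat.card {g : G // d 1 g ≤ R}) / R) atTop = v

/-- The position `Z_n = ω_0 ω_1 ⋯ ω_{n-1}` of the random walk at time `n`, given the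
sequence of increments `ω`. -/
def walkPos (n : ℕ) (ω : ℕ → G) : G := ((List.range n).map ω).prod

/-- `P` is the law on the space of increment sequences of an i.i.d. sequence of law `μ`:
cylinders have product measure.  (This characterizes the path measure of the random walk.) -/
def IsWalkMeasure [MeasurableSpace G] (μ : G → ℝ) (P : Measure (ℕ → G)) : Prop :=
  IsProbabilityMeasure P ∧
    ∀ (n : ℕ) (g : Fin n → G),
      P {ω : ℕ → G | ∀ i : Fin n, ω (i : ℕ) = g i} = ∏ i : Fin n, ENNReal.ofReal (μ (g i))

/-! ### The Gromov boundary, visual metrics, harmonic and quasiconformal measures -/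

/-- A sequence tends to infinity if Gromov products (at the base point `1`) go to `∞`. -/
def TendstoInfinity (d : G → G → ℝ) (u : ℕ → G) : Prop :=
  Tendsto (fun p : ℕ × ℕ => gromov d 1 (u p.1) (u p.2)) atTop atTop

/-- A realization of the Gromov boundary of `(G,d)` as an abstract type `B`:
`conv u b` means that the sequence `u` converges at infinity to the boundary point `b`.
The group acts on its boundary by `smul`. -/
structure BoundaryData (G : Type*) [Group G] (d : G → G → ℝ) (B : Type*) where
  conv : (ℕ → G) → B → Prop
  smul : G → B → B
  conv_unique : ∀ u b b', conv u b → conv u b' → b = b'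
  exists_conv : ∀ u, TendstoInfinity d u → ∃ b, conv u b
  conv_tendstoInfinity : ∀ u b, conv u b → TendstoInfinity d u
  conv_iff : ∀ u v b, conv u b →
    (conv v b ↔ Tendsto (fun n => gromov d 1 (u n) (v n)) atTop atTop)
  conv_surj : ∀ b, ∃ u, conv u b
  smul_conv : ∀ (γ : G) (u) (b), conv u b → conv (fun n => γ * u n) (smul γ b)

/-- Asymptotic Gromov product of two sequences. -/
def seqGromov (d : G → G → ℝ) (u v : ℕ → G) : ℝ :=
  Filter.liminf (fun n => gromov d 1 (u n) (v n)) atTop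

/-- The metric of `B` is a visual metric of parameter `ε` (with comparison constant `C`)
for the hyperbolic distance `d` on the group:  `dist(a,b) ≍ exp(-ε (a|b))`. -/
def IsVisualMetric {B : Type*} [MetricSpace B] (d : G → G → ℝ)
    (bd : BoundaryData G d B) (ε C : ℝ) : Prop :=
  0 < ε ∧ 0 < C ∧
    ∀ u v b b', bd.conv u b → bd.conv v b' → b ≠ b' →
      dist b b' ≤ C * Real.exp (-ε * seqGromov d u v) ∧
      Real.exp (-ε * seqGromov d u v) ≤ C * dist b b'

/-- `ν` is the harmonic measure of the random walk of law `μ` on the boundary `B`: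
it is the law of the almost sure limit `Z_∞` of the walk on the boundary. -/
def IsHarmonicMeasure {B : Type*} [MeasurableSpace G] [MeasurableSpace B]
    (d : G → G → ℝ) (bd : BoundaryData G d B) (μ : G → ℝ)
    (P : Measure (ℕ → G)) (ν : Measure B) : Prop :=
  IsWalkMeasure μ P ∧
    ∃ Zinf : (ℕ → G) → B, Measurable Zinf ∧
      (∀ᵐ ω ∂P, bd.conv (fun n => walkPos n ω) (Zinf ω)) ∧ ν = P.map Zinf

/-- Busemann function `β_b(x,y)` of the boundary point `b`. -/
def busemann {B : Type*} (d : G → G → ℝ) (bd : BoundaryData G d B)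
    (x y : G) (b : B) : ℝ :=
  sSup {t : ℝ | ∃ u, bd.conv u b ∧
    t = Filter.limsup (fun n => d x (u n) - d y (u n)) atTop}

/-- The image measure `γ^*ρ`, `γ^*ρ(A) = ρ(γA)`. -/
def actPush {B : Type*} [MeasurableSpace B] {d : G → G → ℝ}
    (bd : BoundaryData G d B) (γ : G) (ρ : Measure B) : Measure B :=
  ρ.map (bd.smul γ⁻¹)

/-- `ρ` is a quasiconformal measure on the boundary for `(G,d)` of logarithmic growth
parameter `v`: `γ^*ρ` and `ρ` are mutually absolutely continuous, with density
`dγ^*ρ/dρ ≍ exp (v β_b(1,γ⁻¹))` (uniformly in `γ`). -/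
def IsQuasiconformalMeasure {B : Type*} [MeasurableSpace B] {d : G → G → ℝ}
    (bd : BoundaryData G d B) (ρ : Measure B) (v : ℝ) : Prop :=
  ∃ C : ℝ, 0 < C ∧ ∀ γ : G,
    actPush bd γ ρ ≪ ρ ∧ ρ ≪ actPush bd γ ρ ∧
      ∀ᵐ b ∂ρ,
        (actPush bd γ ρ).rnDeriv ρ b
            ≤ ENNReal.ofReal (C * Real.exp (v * busemann d bd 1 γ⁻¹ b)) ∧
        ENNReal.ofReal (C⁻¹ * Real.exp (v * busemann d bd 1 γ⁻¹ b))
            ≤ (actPush bd γ ρ).rnDeriv ρ b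

/-- `ν` is Ahlfors regular of dimension `α`: `ν(B(b,r)) ≍ r^α`. -/
def AhlforsRegularOfDim {B : Type*} [MetricSpace B] [MeasurableSpace B]
    (ν : Measure B) (α : ℝ) : Prop :=
  ∃ C : ℝ, 0 < C ∧ ∀ (b : B) (r : ℝ), 0 < r → r ≤ Metric.diam (Set.univ : Set B) →
    ENNReal.ofReal (C⁻¹ * r ^ α) ≤ ν (Metric.ball b r) ∧
      ν (Metric.ball b r) ≤ ENNReal.ofReal (C * r ^ α)

/-- The Hausdorff dimension of a measure: the infimum of the Hausdorff dimensions of sets of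
full measure. -/
def measureDim {B : Type*} [EMetricSpace B] [MeasurableSpace B] (ν : Measure B) : ℝ≥0∞ :=
  ⨅ (A : Set B) (_ : ν Aᶜ = 0), dimH A

/-! ### Word geodesics -/

/-- `p 0, …, p n` is a geodesic segment for the word metric of `S`. -/
def IsWordGeodesic (S : Finset G) (n : ℕ) (p : ℕ → G) : Prop :=
  ∀ i j : ℕ, i ≤ n → j ≤ n → wordDist S (p i) (p j) = |(i : ℝ) - (j : ℝ)|

/-- `v` lies within distance `r` of some word geodesic segment from `x` to `y`. -/
def NearWordGeodesic (S : Finset G) (x y v : G) (r : ℝ) : Prop :=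
  ∃ (n : ℕ) (p : ℕ → G), IsWordGeodesic S n p ∧ p 0 = x ∧ p n = y ∧
    ∃ i ≤ n, wordDist S v (p i) ≤ r

/-! ### Martin boundary -/

/-- The Martin kernel `K(x,y) = G(x,y)/G(e,y)`. -/
def martinKernel (μ : G → ℝ) (x y : G) : ℝ := greenFn μ x y / greenFn μ 1 y

/-- The embedding `y ↦ K(·,y)` of the group in `C(G)` (pointwise topology). -/
def martinMap (μ : G → ℝ) (y : G) : G → ℝ := fun x => martinKernel μ x y

/-- The Martin boundary: the boundary of the image of the group under the Martin embedding
in the space of functions with the topology of pointwise convergence. -/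
def martinBoundary (μ : G → ℝ) : Set (G → ℝ) :=
  closure (Set.range (martinMap μ)) \ Set.range (martinMap μ)

/-- `h` is a `μ`-harmonic function. -/
def IsHarmonicFn (μ : G → ℝ) (h : G → ℝ) : Prop :=
  ∀ x : G, h x = ∑' y : G, h y * μ (x⁻¹ * y)

/-- `h` is a minimal positive harmonic function. -/
def IsMinimalHarmonic (μ : G → ℝ) (h : G → ℝ) : Prop :=
  IsHarmonicFn μ h ∧ (∀ x, 0 < h x) ∧
    ∀ u : G → ℝ, IsHarmonicFn μ u → (∀ x, 0 ≤ u x) → (∀ x, u x ≤ h x) →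
      ∃ c : ℝ, u = fun x => c * h x

/-! ### Metric space versions (geodesic and quasiruled spaces) -/

/-- A geodesic metric space. -/
def IsGeodesicSpace (X : Type*) [MetricSpace X] : Prop :=
  ∀ x y : X, ∃ f : ℝ → X, f 0 = x ∧ f (dist x y) = y ∧
    ∀ s ∈ Set.Icc (0:ℝ) (dist x y), ∀ t ∈ Set.Icc (0:ℝ) (dist x y),
      dist (f s) (f t) = |s - t|

/-- `f : [a,b] → Y` is a `(Λ,c)`-quasigeodesic segment. -/
def IsQuasigeodesicOn {Y : Type*} [MetricSpace Y] (f : ℝ → Y) (a b Λ c : ℝ) : Prop :=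
  ∀ s ∈ Set.Icc a b, ∀ t ∈ Set.Icc a b,
    |s - t| / Λ - c ≤ dist (f s) (f t) ∧ dist (f s) (f t) ≤ Λ * |s - t| + c

/-- `f : [a,b] → Y` is a `τ`-quasiruler: Gromov products of triples along it are `≤ τ`. -/
def IsQuasirulerOn {Y : Type*} [MetricSpace Y] (f : ℝ → Y) (a b τ : ℝ) : Prop :=
  ∀ s t u : ℝ, s ∈ Set.Icc a b → t ∈ Set.Icc a b → u ∈ Set.Icc a b → s ≤ t → t ≤ u →
    dist (f s) (f t) + dist (f t) (f u) ≤ dist (f s) (f u) + 2 * τ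

/-- A quasiruled metric space: for some constants `(Λ,c,τ)` every pair of points is joined
by a `(Λ,c)`-quasigeodesic, and every `(Λ,c)`-quasigeodesic is a `τ`-quasiruler. -/
def Quasiruled (Y : Type*) [MetricSpace Y] : Prop :=
  ∃ Λ c τ : ℝ, 1 ≤ Λ ∧ 0 ≤ c ∧ 0 ≤ τ ∧
    (∀ x y : Y, ∃ (a b : ℝ) (f : ℝ → Y), a ≤ b ∧ f a = x ∧ f b = y ∧
      IsQuasigeodesicOn f a b Λ c) ∧
    ∀ (f : ℝ → Y) (a b : ℝ), IsQuasigeodesicOn f a b Λ c → IsQuasirulerOn f a b τ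

/-- A metric space is hyperbolic. -/
def HypSpace (Y : Type*) [MetricSpace Y] : Prop :=
  IsHyperbolic (fun x y : Y => dist x y)

/-- `f` is a quasi-isometry between metric spaces. -/
def MetricQI {X Y : Type*} [MetricSpace X] [MetricSpace Y] (f : X → Y) : Prop :=
  ∃ Λ c C : ℝ, 1 ≤ Λ ∧ 0 ≤ c ∧ 0 ≤ C ∧
    QIEmbed (fun a b : X => dist a b) (fun a b : Y => dist a b) f Λ c ∧
    ∀ y : Y, ∃ x : X, dist (f x) y ≤ C

/-!
A non-elementary hyperbolic group contains a ping-pong pair, whose paradoxical action forces a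
spectral gap for convolution by `μ`; together with the exponential moment it makes the Green
function decay exponentially in the word metric. As `-log F` is subadditive, `d_G` is then always
quasi-isometric to a word metric through the identity, and only hyperbolicity is at stake.

Taking logarithms, Ancona's inequality says that the Gromov products `(x|y)_v` of `d_G` are bounded
for `v` near a word geodesic from `x` to `y`, i.e. that word geodesics are quasirulers of `d_G`.
If so, tripods of the word metric are tripods of `d_G` up to a bounded error, and `d_G` is
hyperbolic. Conversely, if `d_G` is hyperbolic, word geodesics are quasigeodesics of `d_G` and the
Morse lemma applies. Since `d_G` is not geodesic, the Morse lemma is proved with virtual points of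
the missing geodesics, described by their distances to the actual points.
-/

/-! ### Gromov products -/

section GromovProduct

variable {X : Type*} {d : X → X → ℝ} {δ : ℝ}

theorem IsHyperbolicWith.mono {δ' : ℝ} (hh : IsHyperbolicWith d δ) (hle : δ ≤ δ') :
    IsHyperbolicWith d δ' :=
  fun w x y z => (sub_le_sub_left hle _).trans (hh w x y z)

theorem IsHyperbolicWith.gromov_le_or (hh : IsHyperbolicWith d δ) (w x y z : X) :
    gromov d w x y ≤ gromov d w y z + δ ∨ gromov d w x z ≤ gromov d w y z + δ :=
  min_le_iff.1 (sub_le_iff_le_add.1 (hh w x y z))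

namespace IsMetricFun

theorem nonneg (hd : IsMetricFun d) (x y : X) : 0 ≤ d x y := by
  linarith [hd.triangle x y x, hd.symm x y, hd.refl x]

theorem gromov_comm (hd : IsMetricFun d) (w x y : X) : gromov d w x y = gromov d w y x := by
  unfold gromov; rw [hd.symm x y]; ring

theorem gromov_nonneg (hd : IsMetricFun d) (w x y : X) : 0 ≤ gromov d w x y := by
  unfold gromov
  linarith [hd.triangle x w y, hd.symm w y]

theorem gromov_le_dist (hd : IsMetricFun d) (w x y : X) : gromov d w x y ≤ d w x := by
  unfold gromov
  linarith [hd.triangle y x w, hd.symm y x, hd.symm w x]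

theorem dist_sub_dist_le_gromov (hd : IsMetricFun d) (w x y : X) :
    d w x - d x y ≤ gromov d w x y := by
  unfold gromov
  linarith [hd.triangle x y w, hd.symm w x]

theorem gromov_le_gromov_add_dist_left (hd : IsMetricFun d) (w x x' y : X) :
    gromov d w x y ≤ gromov d w x' y + d x x' := by
  unfold gromov
  linarith [hd.triangle x x' w, hd.triangle x' x y, hd.symm x' x]

theorem gromov_le_gromov_add_dist_right (hd : IsMetricFun d) (w x y y' : X) :
    gromov d w x y ≤ gromov d w x y' + d y y' := by
  rw [hd.gromov_comm w x y, hd.gromov_comm w x y']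
  exact hd.gromov_le_gromov_add_dist_left w y y' x

theorem gromov_le_gromov_add_dist_base (hd : IsMetricFun d) (w w' x y : X) :
    gromov d w x y ≤ gromov d w' x y + d w w' := by
  unfold gromov
  linarith [hd.triangle x w' w, hd.triangle y w' w, hd.symm w' w]

theorem four_point (hd : IsMetricFun d) (hh : IsHyperbolicWith d δ) (w x y z : X) :
    d w x + d y z ≤ max (d w y + d x z) (d w z + d x y) + 2 * δ := by
  have h := hh.gromov_le_or w x y z
  unfold gromov at h
  rw [← sub_le_iff_le_add, le_max_iff]
  rw [hd.symm x w, hd.symm y w, hd.symm z w] at h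
  rcases h with h | h
  · right; linarith
  · left; linarith

theorem gromov_le_of_lt_gromov (hd : IsMetricFun d) (hh : IsHyperbolicWith d δ) (hδ : 0 ≤ δ)
    {w x x' y y' : X} {K : ℝ} (hxy : gromov d w x y ≤ K) (hx : K + 2 * δ < gromov d w x x')
    (hy : K + 2 * δ < gromov d w y y') : gromov d w x' y' ≤ K + 2 * δ := by
  rw [hd.gromov_comm w x x'] at hx
  rw [hd.gromov_comm w y y'] at hy
  rcases hh.gromov_le_or w x' x y' with h | h
  · rcases hh.gromov_le_or w y' x y with h' | h' <;> linarith [hd.gromov_comm w y' x]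
  · rcases hh.gromov_le_or w y' x y with h' | h' <;> linarith [hd.gromov_comm w y' x]

/- The point reached is the first `q i` with `(q 0 | q i)_g` small. -/
theorem exists_dist_le_of_quasiruler (hd : IsMetricFun d) (hh : IsHyperbolicWith d δ)
    (hδ : 0 ≤ δ) {q : ℕ → X} {M : ℕ} {σ C K : ℝ} {g : X}
    (hstep : ∀ i, d (q i) (q (i + 1)) ≤ σ)
    (hruler : ∀ i ≤ M, gromov d (q i) (q 0) (q M) ≤ C) (hg : gromov d g (q 0) (q M) ≤ K) :
    ∃ i ≤ M, d g (q i) ≤ 2 * (K + δ + σ) + C := by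
  classical
  have hσ : 0 ≤ σ := (hd.nonneg _ _).trans (hstep 0)
  have hex : ∃ i, gromov d g (q 0) (q i) ≤ K + δ ∧ i ≤ M := ⟨M, by linarith, le_rfl⟩
  obtain ⟨hstart, hiM⟩ := Nat.find_spec hex
  have hmin := fun m (hm : m < Nat.find hex) => Nat.find_min hex hm
  generalize Nat.find hex = i at hstart hiM hmin
  have hend : gromov d g (q i) (q M) ≤ K + δ + σ := by
    rcases i with _ | i
    · linarith
    · have hlarge : ¬ gromov d g (q 0) (q i) ≤ K + δ :=
        fun h => hmin i i.lt_succ_self ⟨h, by omega⟩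
      have hprev : gromov d g (q i) (q M) ≤ K + δ := by
        rcases hh.gromov_le_or g (q i) (q 0) (q M) with h | h
        · rw [hd.gromov_comm] at h
          exact absurd (by linarith) hlarge
        · linarith
      linarith [hd.gromov_le_gromov_add_dist_left g (q (i + 1)) (q i) (q M),
        hd.symm (q (i + 1)) (q i), hstep i]
  refine ⟨i, hiM, ?_⟩
  have hi := hruler i hiM
  unfold gromov at hstart hend hi
  linarith [hd.triangle (q 0) g (q M), hd.symm g (q i), hd.symm (q M) (q i), hd.symm g (q M)]

end IsMetricFun

end GromovProduct

/-! ### Left-invariant metrics -/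

/-- A left-invariant metric on a group, as a distance function. -/
structure IsInvMetric (d : G → G → ℝ) : Prop extends IsMetricFun d where
  leftInvariant : LeftInvariant d

namespace IsInvMetric

variable {d : G → G → ℝ}

theorem gromov_mul_left (hd : IsInvMetric d) (g w x y : G) :
    gromov d (g * w) (g * x) (g * y) = gromov d w x y := by
  unfold gromov; simp only [hd.leftInvariant _ _ _]

theorem dist_eq (hd : IsInvMetric d) (x y : G) : d x y = d 1 (x⁻¹ * y) := by
  rw [← hd.leftInvariant x⁻¹ x y, inv_mul_cancel]

theorem dist_self_mul (hd : IsInvMetric d) (x g : G) : d x (x * g) = d 1 g := by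
  rw [hd.dist_eq, inv_mul_cancel_left]

theorem dist_mul_self (hd : IsInvMetric d) (x g : G) : d (x * g) x = d 1 g := by
  rw [hd.symm, hd.dist_self_mul]

theorem dist_one_inv (hd : IsInvMetric d) (g : G) : d 1 g⁻¹ = d 1 g := by
  rw [hd.symm 1 g, hd.dist_eq g, mul_one]

theorem dist_one_mul (hd : IsInvMetric d) (g h : G) :
    d 1 (g * h) = d 1 g + d 1 h - 2 * gromov d 1 g⁻¹ h := by
  unfold gromov
  rw [hd.symm _ 1, hd.symm _ 1, hd.dist_one_inv, hd.dist_eq g⁻¹, inv_inv]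
  ring

theorem gromov_self_mul (hd : IsInvMetric d) (g h : G) :
    gromov d 1 g (g * h) = d 1 g - gromov d 1 g⁻¹ h := by
  have hmul := hd.dist_one_mul g h
  have hstep := hd.dist_self_mul g h
  unfold gromov at hmul ⊢
  linarith [hd.symm g 1, hd.symm (g * h) 1]

theorem dist_one_pow_le (hd : IsInvMetric d) (a : G) (n : ℕ) : d 1 (a ^ n) ≤ n * d 1 a := by
  induction n with
  | zero => simp [hd.refl]
  | succ n ih =>
    have hstep := hd.dist_self_mul (a ^ n) a
    rw [← pow_succ] at hstep
    push_cast
    linarith [hd.triangle 1 (a ^ n) (a ^ (n + 1))]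

end IsInvMetric

theorem isInvMetric_of_length {len : G → ℝ} (hone : len 1 = 0) (hpos : ∀ g, g ≠ 1 → 0 < len g)
    (hinv : ∀ g, len g⁻¹ = len g) (hmul : ∀ g h, len (g * h) ≤ len g + len h) :
    IsInvMetric fun x y => len (x⁻¹ * y) where
  refl x := by rw [inv_mul_cancel, hone]
  pos x y hxy := hpos _ fun h => hxy (inv_mul_eq_one.1 h)
  symm x y := by rw [← hinv, mul_inv_rev, inv_inv]
  triangle x y z := by simpa [mul_assoc] using hmul (x⁻¹ * y) (y⁻¹ * z)
  leftInvariant g x y := by simp [mul_assoc]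

/-! ### Word metrics -/

section WordMetric

variable {S : Finset G}

theorem exists_list_length_eq_wordLength (hS : Generates S) (g : G) :
    ∃ l : List G, l.length = wordLength S g ∧ (∀ a ∈ l, a ∈ S ∨ a⁻¹ ∈ S) ∧ l.prod = g := by
  have hg : g ∈ Subgroup.closure (S : Set G) := hS ▸ Subgroup.mem_top g
  rw [← Subgroup.mem_toSubmonoid, Subgroup.closure_toSubmonoid] at hg
  obtain ⟨l, hl, hp⟩ := Submonoid.exists_list_of_mem_closure hg
  exact Nat.sInf_mem (s := {n : ℕ | ∃ l : List G, l.length = n ∧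
    (∀ a ∈ l, a ∈ S ∨ a⁻¹ ∈ S) ∧ l.prod = g}) ⟨l.length, l, rfl, by simpa using hl, hp⟩

theorem wordLength_prod_le (l : List G) (hl : ∀ a ∈ l, a ∈ S ∨ a⁻¹ ∈ S) :
    wordLength S l.prod ≤ l.length :=
  Nat.sInf_le ⟨l, rfl, hl, rfl⟩

theorem wordLength_one (S : Finset G) : wordLength S (1 : G) = 0 :=
  Nat.le_zero.1 (wordLength_prod_le (S := S) [] (by simp))

theorem wordLength_mul_le (hS : Generates S) (g h : G) :
    wordLength S (g * h) ≤ wordLength S g + wordLength S h := by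
  obtain ⟨l, hl, hlS, rfl⟩ := exists_list_length_eq_wordLength hS g
  obtain ⟨m, hm, hmS, rfl⟩ := exists_list_length_eq_wordLength hS h
  rw [← hl, ← hm, ← List.prod_append, ← List.length_append]
  exact wordLength_prod_le _ fun a ha => (List.mem_append.1 ha).elim (hlS a) (hmS a)

theorem wordLength_inv (hS : Generates S) (g : G) : wordLength S g⁻¹ = wordLength S g := by
  have hle : ∀ g : G, wordLength S g⁻¹ ≤ wordLength S g := by
    intro g
    obtain ⟨l, hl, hlS, rfl⟩ := exists_list_length_eq_wordLength hS g
    rw [← hl, List.prod_inv_reverse]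
    refine (wordLength_prod_le _ ?_).trans_eq (by simp)
    intro a ha
    obtain ⟨b, hb, rfl⟩ := List.mem_map.1 (List.mem_reverse.1 ha)
    simpa using (hlS b hb).symm
  exact le_antisymm (hle g) (by simpa using hle g⁻¹)

theorem eq_one_of_wordLength_eq_zero (hS : Generates S) {g : G} (h : wordLength S g = 0) :
    g = 1 := by
  obtain ⟨l, hl, -, rfl⟩ := exists_list_length_eq_wordLength hS g
  rw [h, List.length_eq_zero_iff] at hl
  rw [hl, List.prod_nil]

theorem isInvMetric_wordDist (hS : Generates S) : IsInvMetric (wordDist S) :=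
  isInvMetric_of_length (len := fun g => (wordLength S g : ℝ)) (by simp [wordLength_one])
    (fun _ hg => Nat.cast_pos.2 (Nat.pos_of_ne_zero (mt (eq_one_of_wordLength_eq_zero hS) hg)))
    (fun g => by rw [wordLength_inv hS]) fun g h => by exact_mod_cast wordLength_mul_le hS g h

theorem IsInvMetric.exists_dist_le_mul_wordDist {d : G → G → ℝ} (hd : IsInvMetric d)
    (hS : Generates S) : ∃ L : ℝ, ∀ x y, d x y ≤ L * wordDist S x y := by
  have hL : ∀ s ∈ S, d 1 s ≤ ∑ s ∈ S, d 1 s := fun s =>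
    Finset.single_le_sum (f := d 1) fun s _ => hd.nonneg 1 s
  refine ⟨∑ s ∈ S, d 1 s, fun x y => ?_⟩
  obtain ⟨l, hl, hlS, hprod⟩ := exists_list_length_eq_wordLength hS (x⁻¹ * y)
  rw [hd.dist_eq, wordDist, ← hl, ← hprod]
  clear hl hprod
  induction l with
  | nil => simp [hd.refl]
  | cons a l ih =>
    have ha : d 1 a ≤ ∑ s ∈ S, d 1 s := (hlS a List.mem_cons_self).elim (hL a) fun h =>
      hd.dist_one_inv a ▸ hL _ h
    have htail := ih fun b hb => hlS b (List.mem_cons_of_mem _ hb)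
    have htri := hd.triangle 1 a (a * l.prod)
    rw [hd.dist_self_mul] at htri
    rw [List.prod_cons, List.length_cons]
    push_cast
    linarith

theorem exists_isWordGeodesic (hS : Generates S) (x y : G) :
    ∃ p : ℕ → G, IsWordGeodesic S (wordLength S (x⁻¹ * y)) p ∧ p 0 = x ∧
      p (wordLength S (x⁻¹ * y)) = y := by
  have hd := isInvMetric_wordDist hS
  obtain ⟨l, hl, hlS, hlprod⟩ := exists_list_length_eq_wordLength hS (x⁻¹ * y)
  set n := wordLength S (x⁻¹ * y)
  set p : ℕ → G := fun i => x * (l.take i).prod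
  have p0 : p 0 = x := by simp [p]
  have pn : p n = y := by simp [p, ← hl, hlprod]
  have hup : ∀ i j, i ≤ j → j ≤ n → wordDist S (p i) (p j) ≤ (j : ℝ) - i := by
    intro i j hij hj
    have hsplit : (l.take j).prod = (l.take i).prod * ((l.take j).drop i).prod := by
      rw [← List.prod_take_mul_prod_drop (l.take j) i, List.take_take, min_eq_left hij]
    rw [hd.leftInvariant, hd.dist_eq, hsplit, inv_mul_cancel_left, ← Nat.cast_sub hij]
    unfold wordDist
    rw [inv_one, one_mul]
    refine Nat.cast_le.2 ((wordLength_prod_le _ fun a ha =>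
      hlS a (List.mem_of_mem_take (List.mem_of_mem_drop ha))).trans_eq ?_)
    rw [List.length_drop, List.length_take, hl, min_eq_left hj]
  have heq : ∀ i j, i ≤ j → j ≤ n → wordDist S (p i) (p j) = (j : ℝ) - i := by
    intro i j hij hj
    have hxy : wordDist S (p 0) (p n) = n := by rw [p0, pn]; rfl
    have h0i := hup 0 i i.zero_le (hij.trans hj)
    push_cast at h0i
    linarith [hup i j hij hj, hup j n hj le_rfl, hd.triangle (p 0) (p i) (p n),
      hd.triangle (p i) (p j) (p n)]
  refine ⟨p, fun i j hi hj => ?_, p0, pn⟩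
  rcases le_total i j with hij | hij
  · rw [heq i j hij hj, abs_sub_comm, abs_of_nonneg (by simpa using hij)]
  · rw [hd.symm, heq j i hij hi, abs_of_nonneg (by simpa using hij)]

open scoped Pointwise in
theorem finite_setOf_wordLength_le (hS : Generates S) (n : ℕ) :
    {g : G | wordLength S g ≤ n}.Finite := by
  classical
  refine ((List.finite_length_le ↥(S ∪ S⁻¹ : Finset G) n).image
    fun l => (l.map Subtype.val).prod).subset fun g hg => ?_
  obtain ⟨l, hl, hlS, rfl⟩ := exists_list_length_eq_wordLength hS g
  have hmem : ∀ a ∈ l, a ∈ (S ∪ S⁻¹ : Finset G) := fun a ha => by simpa using hlS a ha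
  exact ⟨l.attach.map fun a => ⟨a.1, hmem a.1 a.2⟩, by simpa [hl] using hg,
    by simp [Function.comp_def]⟩

theorem finite_setOf_wordDist_le (hS : Generates S) (R : ℝ) :
    {g : G | wordDist S 1 g ≤ R}.Finite := by
  refine (finite_setOf_wordLength_le hS ⌈R⌉₊).subset fun g hg => ?_
  have h : (wordLength S g : ℝ) ≤ R := by simpa [wordDist] using hg
  exact_mod_cast h.trans (Nat.le_ceil R)

theorem exists_lt_wordLength [Infinite G] (hS : Generates S) (n : ℕ) :
    ∃ g : G, n < wordLength S g := by
  by_contra! hle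
  exact Set.infinite_univ ((finite_setOf_wordLength_le hS n).subset fun g _ => hle g)

end WordMetric

/-! ### Loxodromic elements -/

/-- The powers of `a` form a quasi-axis for `d`: they progress at speed at least `η`, and
Gromov products of a positive and a negative power seen from `1` are at most `C`. This encodes
that `a` is loxodromic. -/
structure IsQuasiAxis (d : G → G → ℝ) (a : G) (C η : ℝ) : Prop where
  gromov_le : ∀ m n : ℕ, gromov d 1 (a ^ m)⁻¹ (a ^ n) ≤ C
  le_dist : ∀ n : ℕ, η * n ≤ d 1 (a ^ n)

section Loxodromic

variable {d : G → G → ℝ} {δ κ η C : ℝ} {a b g : G}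

theorem IsQuasiAxis.inv (hd : IsInvMetric d) (ha : IsQuasiAxis d a C η) :
    IsQuasiAxis d a⁻¹ C η where
  gromov_le m n := by
    rw [hd.gromov_comm, inv_pow, inv_pow, inv_inv]; exact ha.gromov_le n m
  le_dist n := by
    rw [inv_pow, hd.dist_one_inv]; exact ha.le_dist n

theorem gromov_inv_pow_le (hd : IsInvMetric d) (hh : IsHyperbolicWith d δ) (hδ : 0 ≤ δ)
    (hκ : gromov d 1 a a⁻¹ ≤ κ) (hlong : 2 * κ + 2 * δ < d 1 a) (n : ℕ) :
    gromov d 1 a⁻¹ (a ^ n) ≤ κ + δ := by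
  have hκ0 := (hd.gromov_nonneg 1 a a⁻¹).trans hκ
  induction n with
  | zero =>
    have h := hd.gromov_le_dist 1 1 a⁻¹
    rw [hd.gromov_comm, hd.refl] at h
    rw [pow_zero]; linarith
  | succ n ih =>
    have hflip := hd.gromov_self_mul a (a ^ n)
    rw [← pow_succ'] at hflip
    rcases hh.gromov_le_or 1 (a ^ (n + 1)) a a⁻¹ with h | h
    · rw [hd.gromov_comm] at h; linarith
    · rw [hd.gromov_comm] at h; linarith

theorem isQuasiAxis_of_gromov_inv_le (hd : IsInvMetric d) (hh : IsHyperbolicWith d δ)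
    (hδ : 0 ≤ δ) (hη : 0 < η) (hκ : gromov d 1 a a⁻¹ ≤ κ)
    (hlong : 2 * κ + 4 * δ + η ≤ d 1 a) : IsQuasiAxis d a (κ + 2 * δ) η where
  gromov_le m n := by
    have hκ0 := (hd.gromov_nonneg 1 a a⁻¹).trans hκ
    have hfwd := gromov_inv_pow_le hd hh hδ hκ (by linarith) n
    cases m with
    | zero =>
      have h := hd.gromov_le_dist 1 1 (a ^ n)
      rw [hd.refl] at h
      simp only [pow_zero, inv_one]; linarith
    | succ m =>
      have hbwd := gromov_inv_pow_le (a := a⁻¹) (κ := κ) hd hh hδ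
        (by rwa [inv_inv, hd.gromov_comm])
        (by rw [hd.dist_one_inv]; linarith) m
      have hflip := hd.gromov_self_mul a⁻¹ (a⁻¹ ^ m)
      rw [← pow_succ', hd.dist_one_inv, inv_pow] at hflip
      rcases hh.gromov_le_or 1 (a ^ (m + 1))⁻¹ a⁻¹ (a ^ n) with h | h
      · rw [hd.gromov_comm] at h; linarith
      · linarith
  le_dist n := by
    induction n with
    | zero => simp [hd.refl]
    | succ n ih =>
      rw [pow_succ', hd.dist_one_mul]
      push_cast
      linarith [gromov_inv_pow_le hd hh hδ hκ (by linarith) n, hd.gromov_nonneg 1 a a⁻¹]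

/- If neither `a` nor `b` works then `a * b` does: it is long, and it fellow-travels `a` at its
beginning and `b⁻¹` at its end. -/
theorem exists_gromov_inv_lt (hd : IsInvMetric d) (hh : IsHyperbolicWith d δ) (hδ : 1 ≤ δ)
    {n : ℝ} (hn : 7 * δ ≤ n) (ha : d 1 a = n) (hb : d 1 b = n) (hab : d a b = 2 * n) :
    ∃ c : G, 2 * gromov d 1 c c⁻¹ + 4 * δ + 1 ≤ d 1 c := by
  by_contra! hno
  have hab0 : gromov d 1 a b = 0 := by
    unfold gromov; rw [hd.symm _ 1, hd.symm _ 1, ha, hb, hab]; ring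
  have ha' := hno a
  have hb' := hno b
  rw [ha] at ha'
  rw [hb] at hb'
  have hab' : gromov d 1 a⁻¹ b ≤ δ := by
    rcases hh.gromov_le_or 1 a⁻¹ a b with h | h
    · rw [hd.gromov_comm] at h; linarith
    · linarith
  have hba' : gromov d 1 b⁻¹ a ≤ δ := by
    rcases hh.gromov_le_or 1 b⁻¹ a b with h | h
    · linarith
    · rw [hd.gromov_comm] at h; linarith
  have hlen := hd.dist_one_mul a b
  have hbegin := hd.gromov_self_mul a b
  have hend := hd.gromov_self_mul b⁻¹ a⁻¹
  rw [← mul_inv_rev, inv_inv, hd.dist_one_inv, hd.gromov_comm 1 b] at hend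
  have hcross : gromov d 1 a (a * b)⁻¹ ≤ 2 * δ := by
    rcases hh.gromov_le_or 1 (a * b)⁻¹ b⁻¹ a with h | h
    · rw [hd.gromov_comm] at h; linarith
    · rw [hd.gromov_comm]; linarith
  have hc : gromov d 1 (a * b) (a * b)⁻¹ ≤ 3 * δ := by
    rcases hh.gromov_le_or 1 (a * b) a (a * b)⁻¹ with h | h
    · rw [hd.gromov_comm] at h; linarith
    · linarith
  linarith [hno (a * b)]

theorem IsQuasiAxis.exists_dist_zpow_le (hd : IsInvMetric d) (hh : IsHyperbolicWith d δ)
    (hδ : 0 ≤ δ) (hb : IsQuasiAxis d b C η) {K : ℝ} {k : ℤ}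
    (hk : gromov d g 1 (b ^ k) ≤ K) :
    ∃ i : ℤ, d g (b ^ i) ≤ 2 * (K + δ + d 1 b) + C := by
  have hnat : ∀ {b : G}, IsQuasiAxis d b C η → ∀ {n : ℕ}, gromov d g 1 (b ^ n) ≤ K →
      ∃ i : ℕ, d g (b ^ i) ≤ 2 * (K + δ + d 1 b) + C := by
    intro b hb n hn
    obtain ⟨i, -, hi⟩ := hd.exists_dist_le_of_quasiruler hh hδ (q := fun i => b ^ i) (M := n)
      (σ := d 1 b) (C := C) (K := K) (fun i => by rw [pow_succ, hd.dist_self_mul]) (fun i hi => by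
        have h := hd.gromov_mul_left (b ^ i) 1 (b ^ i)⁻¹ (b ^ (n - i))
        rw [mul_one, mul_inv_cancel, ← pow_add, Nat.add_sub_cancel' hi] at h
        simpa only [pow_zero, h] using hb.gromov_le _ _) (by rwa [pow_zero])
    exact ⟨i, hi⟩
  rcases Int.eq_nat_or_neg k with ⟨n, rfl | rfl⟩
  · obtain ⟨i, hi⟩ := hnat hb (n := n) (by rwa [zpow_natCast] at hk)
    exact ⟨i, by rwa [zpow_natCast]⟩
  · obtain ⟨i, hi⟩ := hnat (hb.inv hd) (n := n) (by rwa [zpow_neg, zpow_natCast, ← inv_pow] at hk)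
    exact ⟨-i, by rwa [zpow_neg, zpow_natCast, ← inv_pow, ← hd.dist_one_inv b]⟩

theorem IsQuasiAxis.exists_lt_dist_pow (ha : IsQuasiAxis d a C η) (hη : 0 < η) (R : ℝ) :
    ∃ n : ℕ, ∀ m ≥ n, R < d 1 (a ^ m) := by
  obtain ⟨n, hn⟩ := exists_nat_gt (R / η)
  refine ⟨n, fun m hm => ((div_lt_iff₀' hη).1 hn).trans_le ((ha.le_dist m).trans' ?_)⟩
  gcongr

theorem IsQuasiAxis.gromov_mul_pow_le (hd : IsInvMetric d) (ha : IsQuasiAxis d a C η) (g : G)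
    {s l : ℕ} (hsl : s ≤ l) : gromov d (g * a ^ s) g (g * a ^ l) ≤ C := by
  have h := hd.gromov_mul_left (g * a ^ s) 1 (a ^ s)⁻¹ (a ^ (l - s))
  rw [mul_one, mul_inv_cancel_right, mul_assoc, ← pow_add, Nat.add_sub_cancel' hsl] at h
  exact h ▸ ha.gromov_le _ _

theorem dist_zpow_le_of_semiconjBy (hd : IsInvMetric d) (hh : IsHyperbolicWith d δ) (hδ : 0 ≤ δ)
    (hη : 0 < η) (ha : IsQuasiAxis d a C η) (hb : IsQuasiAxis d b C η) {p : ℕ} {q : ℤ}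
    (hp : 0 < p) (hconj : SemiconjBy g (a ^ p) (b ^ q)) :
    ∃ i : ℤ, d g (b ^ i) ≤ 2 * (C + 2 * δ + δ + d 1 b) + C := by
  obtain ⟨j, hj⟩ := ha.exists_lt_dist_pow hη (d 1 g + C + 2 * δ)
  have hlong := hj (p * j) (Nat.le_mul_of_pos_left j hp)
  have hpos : SemiconjBy g (a ^ (p * j)) (b ^ (q * j)) := by
    rw [pow_mul, zpow_mul, zpow_natCast]; exact hconj.pow_right j
  have hneg := hpos.inv_right
  have hopen : gromov d g (b ^ (q * j))⁻¹ (b ^ (q * j)) ≤ C + 2 * δ := by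
    have haxis := hd.gromov_mul_left g 1 (a ^ (p * j))⁻¹ (a ^ (p * j))
    rw [mul_one] at haxis
    refine hd.gromov_le_of_lt_gromov hh hδ (haxis.trans_le (ha.gromov_le _ _)) ?_ ?_
    · have h := hd.dist_sub_dist_le_gromov g (g * (a ^ (p * j))⁻¹) (b ^ (q * j))⁻¹
      rw [hd.dist_self_mul, hd.dist_one_inv] at h
      nth_rw 1 [hneg.eq] at h
      rw [hd.dist_mul_self] at h
      linarith
    · have h := hd.dist_sub_dist_le_gromov g (g * a ^ (p * j)) (b ^ (q * j))
      rw [hd.dist_self_mul] at h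
      nth_rw 1 [hpos.eq] at h
      rw [hd.dist_mul_self] at h
      linarith
  rw [← hd.gromov_mul_left (b ^ (q * j)), mul_inv_cancel, ← zpow_add] at hopen
  obtain ⟨i, hi⟩ := hb.exists_dist_zpow_le hd hh hδ hopen
  refine ⟨i - q * j, ?_⟩
  rwa [← hd.leftInvariant (b ^ (q * j)), ← zpow_add, add_sub_cancel]

theorem exists_dist_zpow_le_of_lt_gromov (hd : IsInvMetric d) (hh : IsHyperbolicWith d δ)
    (hδ : 0 ≤ δ) (ha : IsQuasiAxis d a C η) (hb : IsQuasiAxis d b C η) {s l : ℕ} {k : ℤ}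
    (hsl : s ≤ l) (hs : d 1 g + C + 2 * δ < d 1 (a ^ s))
    (hl : d 1 (g * a ^ s) + C + 2 * δ < gromov d 1 (g * a ^ l) (b ^ k)) :
    ∃ i : ℤ, d (g * a ^ s) (b ^ i) ≤ 2 * (C + 2 * δ + δ + d 1 b) + C := by
  refine hb.exists_dist_zpow_le hd hh hδ (k := k)
    (hd.gromov_le_of_lt_gromov hh hδ (ha.gromov_mul_pow_le hd g hsl) ?_ ?_)
  · have h := hd.dist_sub_dist_le_gromov (g * a ^ s) g 1
    rw [hd.dist_mul_self, hd.symm g] at h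
    linarith
  · linarith [hd.gromov_le_gromov_add_dist_base 1 (g * a ^ s) (g * a ^ l) (b ^ k)]

/- Along a long common stretch of the two axes the elements `b ^ (-i) * g * a ^ s` stay in a fixed
ball, hence two of them coincide. -/
theorem exists_semiconjBy_of_lt_gromov (hd : IsInvMetric d) (hh : IsHyperbolicWith d δ)
    (hδ : 0 ≤ δ) (hfin : ∀ R : ℝ, {g : G | d 1 g ≤ R}.Finite) (hη : 0 < η)
    (ha : IsQuasiAxis d a C η) (hb : IsQuasiAxis d b C η) (g : G) :
    ∃ T : ℝ, ∀ (l : ℕ) (k : ℤ), T < gromov d 1 (g * a ^ l) (b ^ k) →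
      ∃ (p : ℕ) (q : ℤ), 0 < p ∧ SemiconjBy g (a ^ p) (b ^ q) := by
  obtain ⟨s₀, hs₀⟩ := ha.exists_lt_dist_pow hη (d 1 g + C + 2 * δ)
  set B := (hfin (2 * (C + 2 * δ + δ + d 1 b) + C)).toFinset
  have hC : 0 ≤ C := (hd.gromov_nonneg _ _ _).trans (ha.gromov_le 0 0)
  have hdist : ∀ s ≤ s₀ + B.card, d 1 (g * a ^ s) ≤ d 1 g + (s₀ + B.card : ℕ) * d 1 a := by
    intro s hs
    have hpow : (s : ℝ) * d 1 a ≤ (s₀ + B.card : ℕ) * d 1 a := by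
      have := hd.nonneg 1 a
      gcongr
    linarith [hd.triangle 1 g (g * a ^ s), hd.dist_self_mul g (a ^ s), hd.dist_one_pow_le a s]
  refine ⟨d 1 g + (s₀ + B.card : ℕ) * d 1 a + C + 2 * δ, fun l k hT => ?_⟩
  have hl : s₀ + B.card ≤ l := by
    by_contra! hlt
    linarith [hdist l hlt.le, hd.gromov_le_dist 1 (g * a ^ l) (b ^ k)]
  have hclose : ∀ t : ℕ, ∃ i : ℤ, t ≤ B.card → (b ^ i)⁻¹ * (g * a ^ (s₀ + t)) ∈ B := by
    intro t
    by_cases ht : t ≤ B.card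
    · obtain ⟨i, hi⟩ := exists_dist_zpow_le_of_lt_gromov hd hh hδ ha hb (s := s₀ + t) (by omega)
        (hs₀ _ (by omega)) ((hT.trans_le' (by linarith [hdist (s₀ + t) (by omega)])))
      rw [hd.symm, hd.dist_eq] at hi
      exact ⟨i, fun _ => (Set.Finite.mem_toFinset _).2 hi⟩
    · exact ⟨0, fun h => absurd h ht⟩
  choose i hi using hclose
  obtain ⟨s, -, t, -, hst, heq⟩ := Finset.exists_ne_map_eq_of_card_lt_of_maps_to
    (s := Finset.range (B.card + 1)) (t := B) (by simp)
    (f := fun t => (b ^ i t)⁻¹ * (g * a ^ (s₀ + t)))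
    (fun t ht => hi t (by simpa [Nat.lt_succ_iff] using ht))
  wlog hlt : s < t generalizing s t
  · exact this t s hst.symm heq.symm (by omega)
  refine ⟨t - s, i t - i s, by omega, mul_right_cancel (b := a ^ (s₀ + s)) ?_⟩
  rw [mul_assoc, ← pow_add, show t - s + (s₀ + s) = s₀ + t by omega, zpow_sub, mul_assoc,
    mul_assoc, heq, mul_inv_cancel_left]

theorem gromov_zpow_bounded_or_exists_dist_zpow_le (hd : IsInvMetric d)
    (hh : IsHyperbolicWith d δ) (hδ : 0 ≤ δ) (hfin : ∀ R : ℝ, {g : G | d 1 g ≤ R}.Finite)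
    (hη : 0 < η) (ha : IsQuasiAxis d a C η) (g : G) :
    (∃ T : ℝ, ∀ k l : ℤ, gromov d 1 (g * a ^ l) (a ^ k) ≤ T) ∨
      ∃ i : ℤ, d g (a ^ i) ≤ 2 * (C + 2 * δ + δ + d 1 a) + C := by
  refine or_iff_not_imp_right.2 fun hfar => ?_
  have hbdd : ∀ α, IsQuasiAxis d α C η →
      ∃ T, ∀ (l : ℕ) (k : ℤ), gromov d 1 (g * α ^ l) (a ^ k) ≤ T := by
    intro α hα
    obtain ⟨T, hT⟩ := exists_semiconjBy_of_lt_gromov hd hh hδ hfin hη hα ha g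
    refine ⟨T, fun l k => not_lt.1 fun hlt => hfar ?_⟩
    obtain ⟨p, q, hp, hconj⟩ := hT l k hlt
    exact dist_zpow_le_of_semiconjBy hd hh hδ hη hα ha hp hconj
  obtain ⟨T, hT⟩ := hbdd a ha
  obtain ⟨T', hT'⟩ := hbdd a⁻¹ (ha.inv hd)
  refine ⟨max T T', fun k l => ?_⟩
  rcases Int.eq_nat_or_neg l with ⟨n, rfl | rfl⟩
  · rw [zpow_natCast]; exact (hT n k).trans (le_max_left _ _)
  · rw [zpow_neg, zpow_natCast, ← inv_pow]; exact (hT' n k).trans (le_max_right _ _)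

theorem dist_zpow_zpow (hd : IsInvMetric d) (a : G) (m n : ℤ) :
    d (a ^ m) (a ^ n) = d 1 (a ^ (m - n).natAbs) := by
  rw [hd.symm, hd.dist_eq, ← zpow_neg, ← zpow_add, neg_add_eq_sub]
  rcases Int.natAbs_eq (m - n) with h | h
  · conv_lhs => rw [h, zpow_natCast]
  · conv_lhs => rw [h, zpow_neg, zpow_natCast, hd.dist_one_inv]

theorem IsQuasiAxis.quasiIsometric_intDist (hd : IsInvMetric d) (hη : 0 < η)
    (ha : IsQuasiAxis d a C η) {D : ℝ} (hD : ∀ g : G, ∃ i : ℤ, d g (a ^ i) ≤ D) :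
    QuasiIsometric d intDist := by
  choose f hf using hD
  have hD0 : 0 ≤ D := (hd.nonneg _ _).trans (hf 1)
  have hnatAbs : ∀ m n : ℤ, intDist m n = (m - n).natAbs := fun m n => by
    rw [Nat.cast_natAbs]; push_cast; rfl
  have hlower : ∀ m n, η * intDist m n ≤ d (a ^ m) (a ^ n) := fun m n => by
    rw [dist_zpow_zpow hd, hnatAbs]; exact ha.le_dist _
  have hupper : ∀ m n, d (a ^ m) (a ^ n) ≤ d 1 a * intDist m n := fun m n => by
    rw [dist_zpow_zpow hd, hnatAbs, mul_comm]; exact hd.dist_one_pow_le a _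
  set Λ := max 1 (max η⁻¹ (d 1 a))
  have hΛ : 1 ≤ Λ := le_max_left _ _
  have hηΛ : η⁻¹ ≤ Λ := (le_max_left _ _).trans (le_max_right _ _)
  have haΛ : d 1 a ≤ Λ := (le_max_right _ _).trans (le_max_right _ _)
  have hint : ∀ m n, 0 ≤ intDist m n := fun m n => abs_nonneg _
  have hle : ∀ m n R, d (a ^ m) (a ^ n) ≤ R → intDist m n ≤ Λ * R := by
    intro m n R hR
    calc intDist m n ≤ η⁻¹ * R := (le_inv_mul_iff₀ hη).2 ((hlower m n).trans hR)
      _ ≤ Λ * R := by gcongr; exact (hd.nonneg _ _).trans hR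
  refine ⟨f, Λ, Λ * (2 * D), Λ * D, hΛ, by positivity, by positivity, fun x y => ⟨?_, ?_⟩,
    fun k => ⟨a ^ k, hle _ _ _ (hd.symm _ _ ▸ hf (a ^ k))⟩⟩
  · have hxy : d x y ≤ Λ * intDist (f x) (f y) + 2 * D := by
      have := mul_le_mul_of_nonneg_right haΛ (hint (f x) (f y))
      linarith [hd.triangle x (a ^ f x) y, hd.triangle (a ^ f x) (a ^ f y) y, hf x, hf y,
        hd.symm y (a ^ f y), hupper (f x) (f y)]
    rw [sub_le_iff_le_add, div_le_iff₀' (by linarith), mul_add]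
    nlinarith [mul_le_mul_of_nonneg_left hΛ hD0]
  · rw [← mul_add]
    refine hle _ _ _ ?_
    linarith [hd.triangle (a ^ f x) x (a ^ f y), hd.triangle x y (a ^ f y), hf x, hf y,
      hd.symm x (a ^ f x)]

end Loxodromic

/-! ### Ping-pong -/

/-- The sets `A`, `A'`, `B`, `B'` exhibit `a` and `b` as a ping-pong pair: `a⁻¹` sends the
complement of `A` into `A'` and `b⁻¹` sends the complement of `B` into `B'`. -/
structure IsPingPong (a b : G) (A A' B B' : Set G) : Prop where
  inv_mul_mem_left : ∀ g ∉ A, a⁻¹ * g ∈ A'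
  inv_mul_mem_right : ∀ g ∉ B, b⁻¹ * g ∈ B'
  disjoint_left : Disjoint A A'
  disjoint_right : Disjoint B B'
  disjoint_union : Disjoint (A ∪ A') (B ∪ B')

/-- The shadow of `c`: the points whose geodesic from `1` follows the one to `c` at least up to its
midpoint. -/
def halfShadow (d : G → G → ℝ) (c : G) : Set G := {g | d 1 c / 2 ≤ gromov d 1 c g}

section PingPong

variable {d : G → G → ℝ} {δ K : ℝ} {a b g : G}

theorem inv_mul_mem_halfShadow (hd : IsInvMetric d) {c g : G} (hg : g ∉ halfShadow d c) :
    c⁻¹ * g ∈ halfShadow d c⁻¹ := by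
  have h := hd.gromov_self_mul c⁻¹ g
  rw [inv_inv, hd.dist_one_inv] at h
  simp only [halfShadow, mem_ofPred_eq, not_le, hd.dist_one_inv] at hg ⊢
  linarith

theorem disjoint_halfShadow (hd : IsInvMetric d) (hh : IsHyperbolicWith d δ)
    (hab : gromov d 1 a b ≤ K) (ha : 2 * (K + δ) < d 1 a) (hb : 2 * (K + δ) < d 1 b) :
    Disjoint (halfShadow d a) (halfShadow d b) := by
  refine Set.disjoint_left.2 fun g hga hgb => ?_
  simp only [halfShadow, mem_ofPred_eq] at hga hgb
  rw [hd.gromov_comm] at hga hgb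
  rcases hh.gromov_le_or 1 g a b with h | h <;> linarith

theorem isPingPong_halfShadow (hd : IsInvMetric d) (hh : IsHyperbolicWith d δ)
    (haa : gromov d 1 a a⁻¹ ≤ K) (hbb : gromov d 1 b b⁻¹ ≤ K)
    (hab : ∀ x ∈ ({a, a⁻¹} : Set G), ∀ y ∈ ({b, b⁻¹} : Set G), gromov d 1 x y ≤ K)
    (ha : 2 * (K + δ) < d 1 a) (hb : 2 * (K + δ) < d 1 b) :
    IsPingPong a b (halfShadow d a) (halfShadow d a⁻¹) (halfShadow d b) (halfShadow d b⁻¹) := by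
  have ha' : 2 * (K + δ) < d 1 a⁻¹ := by rwa [hd.dist_one_inv]
  have hb' : 2 * (K + δ) < d 1 b⁻¹ := by rwa [hd.dist_one_inv]
  refine ⟨fun g => inv_mul_mem_halfShadow hd, fun g => inv_mul_mem_halfShadow hd,
    disjoint_halfShadow hd hh haa ha ha', disjoint_halfShadow hd hh hbb hb hb', ?_⟩
  simp only [disjoint_union_left, disjoint_union_right]
  exact ⟨⟨disjoint_halfShadow hd hh (hab a (by simp) b (by simp)) ha hb,
    disjoint_halfShadow hd hh (hab a⁻¹ (by simp) b (by simp)) ha' hb⟩,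
    disjoint_halfShadow hd hh (hab a (by simp) b⁻¹ (by simp)) ha hb',
    disjoint_halfShadow hd hh (hab a⁻¹ (by simp) b⁻¹ (by simp)) ha' hb'⟩

theorem gromov_conj_right_le (hd : IsInvMetric d) (g x y : G) :
    gromov d 1 x (g * y * g⁻¹) ≤ gromov d 1 x (g * y) + d 1 g := by
  have h := hd.gromov_le_gromov_add_dist_right 1 x (g * y * g⁻¹) (g * y)
  rwa [hd.dist_mul_self, hd.dist_one_inv] at h

theorem gromov_conj_conj_le (hd : IsInvMetric d) (g x y : G) :
    gromov d 1 (g * x * g⁻¹) (g * y * g⁻¹) ≤ gromov d 1 x y + 3 * d 1 g := by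
  have hright := gromov_conj_right_le hd g (g * x * g⁻¹) y
  have hleft := gromov_conj_right_le hd g (g * y) x
  have hbase := hd.gromov_le_gromov_add_dist_base 1 g (g * x) (g * y)
  have htrans := hd.gromov_mul_left g 1 x y
  rw [mul_one] at htrans
  rw [hd.gromov_comm] at hright
  linarith [hd.gromov_comm 1 (g * y) (g * x), hd.gromov_comm 1 (g * x * g⁻¹) (g * y),
    hd.gromov_comm 1 (g * x * g⁻¹) (g * y * g⁻¹)]

theorem dist_one_le_dist_one_conj (hd : IsInvMetric d) (g x : G) :
    d 1 x ≤ d 1 (g * x * g⁻¹) + 2 * d 1 g := by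
  have h := hd.dist_self_mul g x
  have h' := hd.dist_mul_self (g * x) g⁻¹
  rw [hd.dist_one_inv] at h'
  linarith [hd.triangle g 1 (g * x), hd.triangle 1 (g * x * g⁻¹) (g * x), hd.symm g 1]

theorem IsQuasiAxis.exists_isPingPong (hd : IsInvMetric d) (hh : IsHyperbolicWith d δ)
    {C η T : ℝ} (hη : 0 < η) (ha : IsQuasiAxis d a C η)
    (hg : ∀ k l : ℤ, gromov d 1 (g * a ^ l) (a ^ k) ≤ T) :
    ∃ (b c : G) (B B' C C' : Set G), IsPingPong b c B B' C C' := by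
  have hg0 := hd.nonneg 1 g
  have hC : 0 ≤ C := (hd.gromov_nonneg _ _ _).trans (ha.gromov_le 0 0)
  have hT : 0 ≤ T := (hd.gromov_nonneg _ _ _).trans (hg 0 0)
  obtain ⟨n, hn⟩ := ha.exists_lt_dist_pow hη (2 * (T + C + 3 * d 1 g + δ) + 2 * d 1 g)
  have hlong := hn n le_rfl
  have haxis : gromov d 1 (a ^ n) (a ^ n)⁻¹ ≤ C := by
    rw [hd.gromov_comm]; exact ha.gromov_le n n
  have hinv : (g * a ^ n * g⁻¹)⁻¹ = g * (a ^ n)⁻¹ * g⁻¹ := by group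
  have hpow : ∀ x ∈ ({a ^ n, (a ^ n)⁻¹} : Set G), ∃ k : ℤ, x = a ^ k := by
    rintro x (rfl | rfl)
    exacts [⟨n, by simp⟩, ⟨-n, by simp⟩]
  have hcross : ∀ x ∈ ({a ^ n, (a ^ n)⁻¹} : Set G), ∀ y ∈ ({a ^ n, (a ^ n)⁻¹} : Set G),
      gromov d 1 x (g * y * g⁻¹) ≤ T + C + 3 * d 1 g := by
    intro x hx y hy
    obtain ⟨k, rfl⟩ := hpow x hx
    obtain ⟨l, rfl⟩ := hpow y hy
    linarith [gromov_conj_right_le hd g (a ^ k) (a ^ l), hg k l,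
      hd.gromov_comm 1 (g * a ^ l) (a ^ k)]
  refine ⟨a ^ n, g * a ^ n * g⁻¹, _, _, _, _, isPingPong_halfShadow hd hh
    (K := T + C + 3 * d 1 g) (by linarith) ?_ ?_ (by linarith) ?_⟩
  · rw [hinv]
    linarith [gromov_conj_conj_le hd g (a ^ n) (a ^ n)⁻¹]
  · rw [hinv]
    rintro x hx y (rfl | rfl)
    exacts [hcross x hx _ (by simp), hcross x hx _ (by simp)]
  · linarith [dist_one_le_dist_one_conj hd g (a ^ n)]

end PingPong

/- The halves of a long geodesic segment, translated to start at `1`, have vanishing Gromov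
product. -/
theorem exists_isQuasiAxis_wordDist [Infinite G] {S : Finset G} (hS : Generates S) {δ : ℝ}
    (hδ : 1 ≤ δ) (hh : IsHyperbolicWith (wordDist S) δ) :
    ∃ (a : G) (C : ℝ), IsQuasiAxis (wordDist S) a C 1 := by
  have hd := isInvMetric_wordDist hS
  obtain ⟨n, hn⟩ := exists_nat_ge (7 * δ)
  obtain ⟨g, hg⟩ := exists_lt_wordLength hS (2 * n)
  obtain ⟨p, hp, -, -⟩ := exists_isWordGeodesic hS 1 g
  rw [inv_one, one_mul] at hp
  have hfirst := hp n 0 (by omega) (by omega)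
  have hsecond := hp n (2 * n) (by omega) (by omega)
  have hwhole := hp 0 (2 * n) (by omega) (by omega)
  rw [← hd.leftInvariant (p n)⁻¹, inv_mul_cancel] at hfirst hsecond
  rw [← hd.leftInvariant (p n)⁻¹] at hwhole
  have hn0 : (0 : ℝ) ≤ n := n.cast_nonneg
  push_cast at hfirst hsecond hwhole
  rw [sub_zero, abs_of_nonneg hn0] at hfirst
  rw [show (n : ℝ) - 2 * n = -n by ring, abs_neg, abs_of_nonneg hn0] at hsecond
  rw [zero_sub, abs_neg, abs_of_nonneg (by positivity)] at hwhole
  obtain ⟨a, ha⟩ := exists_gromov_inv_lt hd hh hδ hn hfirst hsecond hwhole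
  exact ⟨a, _, isQuasiAxis_of_gromov_inv_le hd hh (by linarith) one_pos le_rfl ha⟩

theorem NonElemHyperbolic.exists_isPingPong (hG : NonElemHyperbolic G) :
    ∃ (a b : G) (A A' B B' : Set G), IsPingPong a b A A' B B' := by
  obtain ⟨hinf, ⟨S, hS⟩, hhyp⟩ := hG
  obtain ⟨⟨δ, hδ, hh⟩, hline⟩ := hhyp S hS
  have hd := isInvMetric_wordDist hS
  replace hh := hh.mono (show δ ≤ δ + 1 by linarith)
  obtain ⟨a, C, ha⟩ := exists_isQuasiAxis_wordDist hS (by linarith) hh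
  obtain ⟨g, T, hg⟩ : ∃ (g : G) (T : ℝ), ∀ k l : ℤ,
      gromov (wordDist S) 1 (g * a ^ l) (a ^ k) ≤ T := by
    by_contra hno
    exact hline (ha.quasiIsometric_intDist hd one_pos fun g =>
      (gromov_zpow_bounded_or_exists_dist_zpow_le hd hh (by linarith)
        (finite_setOf_wordDist_le hS) one_pos ha g).resolve_left fun hg => hno ⟨g, hg⟩)
  exact ha.exists_isPingPong hd hh one_pos hg

/-! ### The spectral gap -/

/-- The squared `ℓ²` norm of `f`, possibly infinite. -/
def normSq (f : G → ℝ) : ℝ≥0∞ := ∑' g, ENNReal.ofReal (f g ^ 2)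

/-- The squared `ℓ²` distance between `f` and its left translate by `h`. -/
def displacement (h : G) (f : G → ℝ) : ℝ≥0∞ := ∑' g, ENNReal.ofReal ((f (h⁻¹ * g) - f g) ^ 2)

/-- The Dirichlet form of the left convolution operator by `m`, at `f`. -/
def dirichletForm (m : G → ℝ≥0∞) (f : G → ℝ) : ℝ≥0∞ := ∑' h, m h * displacement h f

/-- `ρ < 1` bounds the quadratic form `f ↦ ⟨m * f, f⟩` of the left convolution operator by `m`.
Testing on nonnegative functions is enough, and avoids all summability conditions. -/
structure HasSpectralGap (m : G → ℝ≥0∞) (ρ : ℝ≥0∞) : Prop where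
  lt_one : ρ < 1
  form_le : ∀ f : G → ℝ≥0∞, ∑' h, m h * ∑' g, f (h⁻¹ * g) * f g ≤ ρ * ∑' g, f g ^ 2

section SpectralGap

variable {m : G → ℝ≥0∞} {a b : G} {A A' B B' : Set G}

theorem tsum_mul_left_eq (h : G) (F : G → ℝ≥0∞) : ∑' g, F (h * g) = ∑' g, F g :=
  (Equiv.mulLeft h).tsum_eq F

theorem ofNat_mul_ofReal (n : ℕ) [n.AtLeastTwo] (x : ℝ) :
    (ofNat(n) : ℝ≥0∞) * ENNReal.ofReal x = ENNReal.ofReal (ofNat(n) * x) := by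
  rw [ENNReal.ofReal_mul (Nat.ofNat_nonneg n), ENNReal.ofReal_ofNat]

theorem displacement_one (f : G → ℝ) : displacement 1 f = 0 := by
  simp [displacement]

theorem displacement_inv (x : G) (f : G → ℝ) : displacement x⁻¹ f = displacement x f := by
  unfold displacement
  rw [← tsum_mul_left_eq x⁻¹]
  refine tsum_congr fun g => ?_
  rw [inv_inv, mul_inv_cancel_left, ← neg_sub, neg_sq]

theorem displacement_mul_le (x y : G) (f : G → ℝ) :
    displacement (x * y) f ≤ 2 * (displacement x f + displacement y f) := by
  have hy : displacement y f =
      ∑' g, ENNReal.ofReal ((f (y⁻¹ * (x⁻¹ * g)) - f (x⁻¹ * g)) ^ 2) :=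
    (tsum_mul_left_eq x⁻¹ fun g => ENNReal.ofReal ((f (y⁻¹ * g) - f g) ^ 2)).symm
  rw [hy]
  unfold displacement
  rw [← ENNReal.tsum_add, ← ENNReal.tsum_mul_left]
  refine ENNReal.tsum_le_tsum fun g => ?_
  rw [← ENNReal.ofReal_add (sq_nonneg _) (sq_nonneg _), ofNat_mul_ofReal, mul_inv_rev, mul_assoc]
  refine ENNReal.ofReal_le_ofReal ?_
  linarith [sq_nonneg ((f (y⁻¹ * (x⁻¹ * g)) - f (x⁻¹ * g)) - (f (x⁻¹ * g) - f g))]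

theorem exists_displacement_le (hm : ∀ h, m h ≠ ∞)
    (hgen : Subgroup.closure {g : G | m g ≠ 0} = ⊤) (h : G) :
    ∃ C ≠ ∞, ∀ f : G → ℝ, displacement h f ≤ C * dirichletForm m f := by
  have hh : h ∈ Subgroup.closure {g : G | m g ≠ 0} := hgen ▸ Subgroup.mem_top h
  induction hh using Subgroup.closure_induction with
  | mem x hx =>
    refine ⟨(m x)⁻¹, ENNReal.inv_ne_top.2 hx, fun f => ?_⟩
    rw [← ENNReal.mul_le_iff_le_inv hx (hm x)]
    exact ENNReal.le_tsum (f := fun h => m h * displacement h f) x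
  | one => exact ⟨0, ENNReal.zero_ne_top, fun f => by simp [displacement_one]⟩
  | mul x y _ _ ihx ihy =>
    obtain ⟨C, hC, hx⟩ := ihx
    obtain ⟨D, hD, hy⟩ := ihy
    refine ⟨2 * (C + D), by finiteness, fun f => ?_⟩
    calc displacement (x * y) f ≤ 2 * (displacement x f + displacement y f) :=
          displacement_mul_le x y f
      _ ≤ 2 * (C * dirichletForm m f + D * dirichletForm m f) := by gcongr; exacts [hx f, hy f]
      _ = 2 * (C + D) * dirichletForm m f := by ring
  | inv x _ ih => simpa only [displacement_inv] using ih

/- Fold `G` into `A ∪ A'` by moving the complement of `A` by `a⁻¹`; the fold is injective, and costs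
the displacement of `f` by `a`. -/
theorem two_mul_normSq_le (ha : ∀ g ∉ A, a⁻¹ * g ∈ A') (hA : Disjoint A A') (f : G → ℝ) :
    2 * normSq f ≤ 3 * ∑' g, (A ∪ A').indicator (fun g => ENNReal.ofReal (f g ^ 2)) g
      + 6 * displacement a f := by
  classical
  set F : G → ℝ≥0∞ := fun g => ENNReal.ofReal (f g ^ 2)
  set fold : G → G := A.piecewise id (a⁻¹ * ·)
  have fold_of_mem : ∀ g ∈ A, fold g = g := fun g hg => A.piecewise_eq_of_mem _ _ hg
  have fold_of_notMem : ∀ g ∉ A, fold g = a⁻¹ * g := fun g hg => A.piecewise_eq_of_notMem _ _ hg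
  have fold_mem : ∀ g, fold g ∈ A ∪ A' := fun g => by
    by_cases hg : g ∈ A
    · rw [fold_of_mem g hg]; exact Or.inl hg
    · rw [fold_of_notMem g hg]; exact Or.inr (ha g hg)
  have fold_injective : Function.Injective fold :=
    (injective_piecewise_iff _).2 ⟨Function.injective_id.injOn, (mul_right_injective _).injOn,
      fun x hx y hy hxy => hA.ne_of_mem hx (ha y hy) hxy⟩
  have hpoint : ∀ g, 2 * F g ≤
      3 * F (fold g) + 6 * ENNReal.ofReal ((f (a⁻¹ * g) - f g) ^ 2) := fun g => by
    rw [ofNat_mul_ofReal, ofNat_mul_ofReal, ofNat_mul_ofReal,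
      ← ENNReal.ofReal_add (by positivity) (by positivity)]
    refine ENNReal.ofReal_le_ofReal ?_
    by_cases hg : g ∈ A
    · rw [fold_of_mem g hg]; linarith [sq_nonneg (f g), sq_nonneg (f (a⁻¹ * g) - f g)]
    · rw [fold_of_notMem g hg]; linarith [sq_nonneg (f (a⁻¹ * g) + 2 * (f (a⁻¹ * g) - f g))]
  calc 2 * normSq f = ∑' g, 2 * F g := ENNReal.tsum_mul_left.symm
    _ ≤ ∑' g, (3 * F (fold g) + 6 * ENNReal.ofReal ((f (a⁻¹ * g) - f g) ^ 2)) :=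
        ENNReal.tsum_le_tsum hpoint
    _ = 3 * ∑' g, (A ∪ A').indicator F (fold g) + 6 * displacement a f := by
        simp only [ENNReal.tsum_add, ENNReal.tsum_mul_left, displacement,
          indicator_of_mem (fold_mem _)]
    _ ≤ _ := by
        gcongr _ * ?_ + _
        exact ENNReal.tsum_comp_le_tsum_of_injective fold_injective ((A ∪ A').indicator F)

theorem IsPingPong.normSq_le (hab : IsPingPong a b A A' B B') {f : G → ℝ} (hf : normSq f ≠ ∞) :
    normSq f ≤ 6 * (displacement a f + displacement b f) := by
  set F : G → ℝ≥0∞ := fun g => ENNReal.ofReal (f g ^ 2)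
  have hsplit : ∑' g, (A ∪ A').indicator F g + ∑' g, (B ∪ B').indicator F g ≤ normSq f := by
    rw [← ENNReal.tsum_add]
    refine ENNReal.tsum_le_tsum fun g => ?_
    rw [← congrFun (indicator_union_of_disjoint hab.disjoint_union F) g]
    exact indicator_le_self _ _ _
  have hsum : normSq f + 3 * normSq f ≤ 6 * (displacement a f + displacement b f) + 3 * normSq f :=
    calc normSq f + 3 * normSq f = 2 * normSq f + 2 * normSq f := by ring
      _ ≤ (3 * ∑' g, (A ∪ A').indicator F g + 6 * displacement a f)
          + (3 * ∑' g, (B ∪ B').indicator F g + 6 * displacement b f) :=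
        add_le_add (two_mul_normSq_le hab.inv_mul_mem_left hab.disjoint_left f)
          (two_mul_normSq_le hab.inv_mul_mem_right hab.disjoint_right f)
      _ = 6 * (displacement a f + displacement b f) +
          3 * (∑' g, (A ∪ A').indicator F g + ∑' g, (B ∪ B').indicator F g) := by ring
      _ ≤ 6 * (displacement a f + displacement b f) + 3 * normSq f := by gcongr
  exact (ENNReal.add_le_add_iff_right (by finiteness)).1 hsum

theorem IsPingPong.exists_normSq_le (hab : IsPingPong a b A A' B B') (hm : ∀ h, m h ≠ ∞)
    (hgen : Subgroup.closure {g : G | m g ≠ 0} = ⊤) :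
    ∃ K ≠ ∞, ∀ f : G → ℝ, normSq f ≠ ∞ → normSq f ≤ K * dirichletForm m f := by
  obtain ⟨C, hC, ha⟩ := exists_displacement_le hm hgen a
  obtain ⟨D, hD, hb⟩ := exists_displacement_le hm hgen b
  refine ⟨6 * (C + D), by finiteness, fun f hf => ?_⟩
  calc normSq f ≤ 6 * (displacement a f + displacement b f) := hab.normSq_le hf
    _ ≤ 6 * (C * dirichletForm m f + D * dirichletForm m f) := by gcongr; exacts [ha f, hb f]
    _ = 6 * (C + D) * dirichletForm m f := by ring

theorem two_mul_form_add_dirichletForm (hm : ∑' h, m h = 1) {f : G → ℝ} (hf : ∀ g, 0 ≤ f g) :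
    2 * ∑' h, m h * ∑' g, ENNReal.ofReal (f (h⁻¹ * g)) * ENNReal.ofReal (f g) + dirichletForm m f
      = 2 * normSq f := by
  have key : ∀ h : G, 2 * ∑' g, ENNReal.ofReal (f (h⁻¹ * g)) * ENNReal.ofReal (f g)
      + displacement h f = 2 * normSq f := fun h => by
    have htranslate : ∑' g, ENNReal.ofReal (f (h⁻¹ * g) ^ 2) = normSq f :=
      tsum_mul_left_eq h⁻¹ fun g => ENNReal.ofReal (f g ^ 2)
    calc 2 * ∑' g, ENNReal.ofReal (f (h⁻¹ * g)) * ENNReal.ofReal (f g) + displacement h f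
        = ∑' g, (ENNReal.ofReal (f (h⁻¹ * g) ^ 2) + ENNReal.ofReal (f g ^ 2)) := by
          rw [displacement, ← ENNReal.tsum_mul_left, ← ENNReal.tsum_add]
          refine tsum_congr fun g => ?_
          have hg := hf g
          have hg' := hf (h⁻¹ * g)
          rw [← ENNReal.ofReal_mul hg', ofNat_mul_ofReal,
            ← ENNReal.ofReal_add (by positivity) (by positivity),
            ← ENNReal.ofReal_add (by positivity) (by positivity)]
          congr 1
          ring
      _ = 2 * normSq f := by rw [ENNReal.tsum_add, htranslate, ← normSq, two_mul]
  calc 2 * ∑' h, m h * ∑' g, ENNReal.ofReal (f (h⁻¹ * g)) * ENNReal.ofReal (f g)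
        + dirichletForm m f
      = ∑' h, m h * (2 * ∑' g, ENNReal.ofReal (f (h⁻¹ * g)) * ENNReal.ofReal (f g)
          + displacement h f) := by
        rw [dirichletForm, ← ENNReal.tsum_mul_left, ← ENNReal.tsum_add]
        exact tsum_congr fun h => by ring
    _ = 2 * normSq f := by simp only [key, ENNReal.tsum_mul_right, hm, one_mul]

theorem le_ofReal_mul_of_two_mul_add_eq {K M D N : ℝ≥0∞} (hN : N ≠ ∞) (hK : K ≠ ∞)
    (h : 2 * M + D = 2 * N) (hND : N ≤ K * D) :
    M ≤ ENNReal.ofReal (1 - 1 / (2 * (K.toReal + 1))) * N := by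
  have hfin : 2 * M + D ≠ ∞ := by rw [h]; finiteness
  have hM : M ≠ ∞ := fun hM => by simp [hM] at hfin
  have hD : D ≠ ∞ := fun hD => by simp [hD] at hfin
  lift M to NNReal using hM
  lift D to NNReal using hD
  lift N to NNReal using hN
  lift K to NNReal using hK
  norm_cast at h hND
  replace h : 2 * (M : ℝ) + D = 2 * N := mod_cast h
  replace hND : (N : ℝ) ≤ K * D := mod_cast hND
  rw [ENNReal.coe_toReal, ← ENNReal.ofReal_coe_nnreal (p := N), ← ENNReal.ofReal_mul' N.coe_nonneg,
    ← ENNReal.ofReal_coe_nnreal (p := M)]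
  refine ENNReal.ofReal_le_ofReal ?_
  have hND' : (N : ℝ) / (K + 1) ≤ D := by
    rw [div_le_iff₀ (by positivity)]
    linarith [D.2]
  calc (M : ℝ) ≤ N - N / (K + 1) / 2 := by linarith
    _ = (1 - 1 / (2 * (K + 1))) * N := by field

theorem IsPingPong.exists_hasSpectralGap (hab : IsPingPong a b A A' B B') (hm : ∑' h, m h = 1)
    (hgen : Subgroup.closure {g : G | m g ≠ 0} = ⊤) : ∃ ρ, HasSpectralGap m ρ := by
  obtain ⟨K, hK, hpoincare⟩ := hab.exists_normSq_le
    (fun h => ne_top_of_le_ne_top (hm ▸ ENNReal.one_ne_top) (ENNReal.le_tsum h)) hgen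
  have hκ : 0 < 1 / (2 * (K.toReal + 1)) := by positivity
  have hκ' : 1 / (2 * (K.toReal + 1)) < 1 := by
    rw [div_lt_one (by positivity)]
    linarith [K.toReal_nonneg]
  refine ⟨ENNReal.ofReal (1 - 1 / (2 * (K.toReal + 1))), ENNReal.ofReal_lt_one.2 (by linarith),
    fun f => ?_⟩
  by_cases htop : ∑' g, f g ^ 2 = ∞
  · rw [htop, ENNReal.mul_top (by simpa using hκ')]
    exact le_top
  lift f to G → NNReal using fun g hg =>
    ENNReal.ne_top_of_tsum_ne_top htop g (by rw [hg]; rfl)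
  have hnorm : normSq (fun g => (f g : ℝ)) = ∑' g, (f g : ℝ≥0∞) ^ 2 :=
    tsum_congr fun g => by simp only [ENNReal.ofReal_pow NNReal.zero_le_coe,
      ENNReal.ofReal_coe_nnreal]
  have henergy := two_mul_form_add_dirichletForm hm (f := fun g => (f g : ℝ)) fun g => (f g).2
  simp only [ENNReal.ofReal_coe_nnreal, hnorm] at henergy
  exact le_ofReal_mul_of_two_mul_add_eq htop hK henergy
    (hnorm ▸ hpoincare (fun g => (f g : ℝ)) (hnorm ▸ htop))

end SpectralGap

/-! ### Exponential decay of the Green function -/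

open scoped Classical in
/-- The law of the position at time `n` of the random walk from `1` with step density `m`: the
`ℝ≥0∞`-valued counterpart of `convPow`. -/
def econvPow (m : G → ℝ≥0∞) : ℕ → G → ℝ≥0∞
  | 0 => Pi.single 1 1
  | n + 1 => fun g => ∑' h, m h * econvPow m n (h⁻¹ * g)

/-- The Green function: the expected number of visits to `g` of the random walk from `1`. -/
def egreen (m : G → ℝ≥0∞) (g : G) : ℝ≥0∞ := ∑' n, econvPow m n g

/-- The Green function at the parameter `s`, truncated to the first `N` steps. -/
def truncEGreen (m : G → ℝ≥0∞) (s : ℝ≥0∞) (N : ℕ) (g : G) : ℝ≥0∞ :=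
  ∑ n ∈ Finset.range N, s ^ n * econvPow m n g

section GreenDecay

variable {m w : G → ℝ≥0∞} {s ρ : ℝ≥0∞}

theorem econvPow_zero_one (m : G → ℝ≥0∞) : econvPow m 0 1 = 1 := by
  classical exact Pi.single_eq_same _ _

theorem econvPow_zero_of_ne (m : G → ℝ≥0∞) {g : G} (hg : g ≠ 1) : econvPow m 0 g = 0 := by
  classical exact Pi.single_eq_of_ne hg _

theorem econvPow_succ (m : G → ℝ≥0∞) (n : ℕ) (g : G) :
    econvPow m (n + 1) g = ∑' h, m h * econvPow m n (h⁻¹ * g) := rfl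

theorem tsum_econvPow_zero_mul (m F : G → ℝ≥0∞) : ∑' g, econvPow m 0 g * F g = F 1 := by
  rw [tsum_eq_single 1 fun g hg => by rw [econvPow_zero_of_ne m hg, zero_mul], econvPow_zero_one,
    one_mul]

theorem econvPow_succ' (m : G → ℝ≥0∞) (n : ℕ) (g : G) :
    econvPow m (n + 1) g = ∑' h, m h * econvPow m n (g * h⁻¹) := by
  induction n generalizing g with
  | zero =>
    rw [econvPow_succ]
    refine tsum_congr fun h => ?_
    congr 1
    by_cases hg : g = h
    · rw [hg, inv_mul_cancel, mul_inv_cancel]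
    · rw [econvPow_zero_of_ne m fun h' => hg (inv_mul_eq_one.1 h').symm,
        econvPow_zero_of_ne m fun h' => hg (mul_inv_eq_one.1 h')]
  | succ n ih =>
    calc econvPow m (n + 1 + 1) g
        = ∑' k, ∑' h, m k * (m h * econvPow m n (k⁻¹ * g * h⁻¹)) := by
          simp only [econvPow_succ m (n + 1), ih, ENNReal.tsum_mul_left]
      _ = ∑' h, ∑' k, m h * (m k * econvPow m n (k⁻¹ * (g * h⁻¹))) := by
          rw [ENNReal.tsum_comm]
          simp only [mul_assoc, mul_left_comm (m _) (m _)]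
      _ = ∑' h, m h * econvPow m (n + 1) (g * h⁻¹) := by
          simp only [econvPow_succ, ENNReal.tsum_mul_left]

theorem econvPow_inv (hs : ∀ g, m g⁻¹ = m g) (n : ℕ) (g : G) :
    econvPow m n g⁻¹ = econvPow m n g := by
  induction n generalizing g with
  | zero =>
    by_cases hg : g = 1
    · rw [hg, inv_one]
    · rw [econvPow_zero_of_ne m hg, econvPow_zero_of_ne m (inv_ne_one.2 hg)]
  | succ n ih =>
    rw [econvPow_succ, econvPow_succ', ← (Equiv.inv G).tsum_eq]
    refine tsum_congr fun h => ?_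
    rw [Equiv.inv_apply, hs, ← ih (g * h⁻¹), mul_inv_rev, inv_inv]

theorem egreen_inv (hs : ∀ g, m g⁻¹ = m g) (g : G) : egreen m g⁻¹ = egreen m g := by
  simp only [egreen, econvPow_inv hs]

theorem egreen_eq (m : G → ℝ≥0∞) (g : G) :
    egreen m g = econvPow m 0 g + ∑' h, m h * egreen m (h⁻¹ * g) := by
  simp only [egreen]
  rw [tsum_eq_zero_add' ENNReal.summable]
  simp only [econvPow_succ, ← ENNReal.tsum_mul_left]
  rw [ENNReal.tsum_comm]

theorem tsum_econvPow_mul_le (hw1 : w 1 ≤ 1) (hw : ∀ g h, w (g * h) ≤ w g * w h) (n : ℕ) :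
    ∑' g, econvPow m n g * w g ≤ (∑' g, m g * w g) ^ n := by
  induction n with
  | zero => rwa [tsum_econvPow_zero_mul, pow_zero]
  | succ n ih =>
    calc ∑' g, econvPow m (n + 1) g * w g
        = ∑' h, ∑' g, m h * econvPow m n (h⁻¹ * g) * w (h * (h⁻¹ * g)) := by
          simp only [econvPow_succ, ← ENNReal.tsum_mul_right, mul_inv_cancel_left]
          exact ENNReal.tsum_comm
      _ ≤ ∑' h, ∑' g, m h * econvPow m n (h⁻¹ * g) * (w h * w (h⁻¹ * g)) := by
          gcongr
          exact hw _ _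
      _ = ∑' h, m h * w h * ∑' g, econvPow m n (h⁻¹ * g) * w (h⁻¹ * g) := by
          simp only [← ENNReal.tsum_mul_left, mul_mul_mul_comm]
      _ = (∑' h, m h * w h) * ∑' g, econvPow m n g * w g := by
          simp only [tsum_mul_left_eq _ fun g => econvPow m n g * w g, ENNReal.tsum_mul_right]
      _ ≤ (∑' g, m g * w g) ^ (n + 1) := by
          rw [pow_succ']
          gcongr

theorem tsum_truncEGreen_le (hm : ∑' h, m h = 1) (s : ℝ≥0∞) (N : ℕ) :
    ∑' g, truncEGreen m s N g ≤ ∑ n ∈ Finset.range N, s ^ n := by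
  simp only [truncEGreen]
  rw [Summable.tsum_finsetSum fun _ _ => ENNReal.summable]
  refine Finset.sum_le_sum fun n _ => ?_
  have hsum : ∑' g, econvPow m n g ≤ 1 := by
    simpa [hm] using tsum_econvPow_mul_le (m := m) (w := 1) le_rfl (by simp) n
  rw [ENNReal.tsum_mul_left]
  exact mul_le_of_le_one_right' hsum

theorem truncEGreen_succ (m : G → ℝ≥0∞) (s : ℝ≥0∞) (N : ℕ) (g : G) :
    truncEGreen m s (N + 1) g = econvPow m 0 g + s * ∑' h, m h * truncEGreen m s N (h⁻¹ * g) := by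
  simp only [truncEGreen, Finset.sum_range_succ', pow_zero, one_mul, econvPow_succ, Finset.mul_sum,
    pow_succ', ← ENNReal.tsum_mul_left]
  rw [Summable.tsum_finsetSum fun _ _ => ENNReal.summable, add_comm]
  simp only [mul_assoc, mul_left_comm (m _)]

theorem truncEGreen_mono (m : G → ℝ≥0∞) (s : ℝ≥0∞) (g : G) : Monotone (truncEGreen m s · g) :=
  fun _ _ hN => Finset.sum_le_sum_of_subset (Finset.range_mono hN)

theorem le_of_sq_le_of_le_add {X v θ : ℝ≥0∞} (hθ : θ < 1) (hX : X ≠ ∞) (hv : v ^ 2 ≤ X)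
    (h : X ≤ v + θ * X) : X ≤ ((1 - θ)⁻¹) ^ 2 := by
  have hθ' : 1 - θ ≠ 0 := (tsub_pos_of_lt hθ).ne'
  have hXv : X ≤ (1 - θ)⁻¹ * v := by
    rw [mul_comm, ← div_eq_mul_inv, ENNReal.le_div_iff_mul_le (Or.inl hθ') (Or.inl (by finiteness)),
      ENNReal.mul_sub (fun _ _ => hX), mul_one, mul_comm]
    exact tsub_le_iff_right.2 h
  have hv' : v ≤ (1 - θ)⁻¹ := by
    by_contra! hlt
    have hv0 : v ≠ 0 := (bot_le.trans_lt hlt).ne'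
    have hvtop : v ≠ ∞ := fun hv' => hX (by simpa [hv'] using hv)
    exact absurd ((sq v ▸ hv).trans hXv) (not_le.2 (ENNReal.mul_lt_mul_left hv0 hvtop hlt))
  exact hXv.trans (by rw [sq]; gcongr)

/- Pairing `V ≤ δ₁ + s m * V` with `V` itself, the spectral gap gives `‖V‖² ≤ V 1 + s ρ ‖V‖²`,
while `V 1 ^ 2 ≤ ‖V‖²`. -/
theorem HasSpectralGap.truncEGreen_le (hgap : HasSpectralGap m ρ) (hm : ∑' h, m h = 1)
    (hs : s ≠ ∞) (hsρ : s * ρ < 1) (N : ℕ) (g : G) :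
    truncEGreen m s N g ≤ (1 - s * ρ)⁻¹ := by
  set V := truncEGreen m s N with hV
  set A : ℝ≥0∞ := ∑ n ∈ Finset.range N, s ^ n
  have hA : A ≠ ∞ := ENNReal.sum_ne_top.2 fun n _ => ENNReal.pow_ne_top hs
  have hVA : ∑' g, V g ≤ A := tsum_truncEGreen_le hm s N
  have hfin : ∑' g, V g ^ 2 ≠ ∞ := by
    refine ne_top_of_le_ne_top (ENNReal.mul_ne_top hA hA) ?_
    calc ∑' g, V g ^ 2 ≤ ∑' g, A * V g := by
          simp only [sq]
          gcongr with g
          exact (ENNReal.le_tsum g).trans hVA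
      _ ≤ A * A := by rw [ENNReal.tsum_mul_left]; gcongr
  have hpoint : ∀ g, V g ^ 2 ≤ ∑' g, V g ^ 2 := ENNReal.le_tsum
  have hform : ∑' g, V g ^ 2 ≤ V 1 + s * ρ * ∑' g, V g ^ 2 := by
    calc ∑' g, V g ^ 2
        ≤ ∑' g, (econvPow m 0 g * V g + s * ((∑' h, m h * V (h⁻¹ * g)) * V g)) := by
          gcongr with g
          rw [sq, ← mul_assoc, ← add_mul, hV, ← truncEGreen_succ]
          gcongr
          exact truncEGreen_mono m s g N.le_succ
      _ = V 1 + s * ∑' h, m h * ∑' g, V (h⁻¹ * g) * V g := by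
          rw [ENNReal.tsum_add, tsum_econvPow_zero_mul, ENNReal.tsum_mul_left]
          simp only [← ENNReal.tsum_mul_right, ← ENNReal.tsum_mul_left]
          rw [ENNReal.tsum_comm]
          simp only [mul_assoc]
      _ ≤ V 1 + s * ρ * ∑' g, V g ^ 2 := by
          rw [mul_assoc]
          gcongr
          exact hgap.form_le V
  exact (ENNReal.pow_le_pow_left_iff two_ne_zero).1
    ((hpoint g).trans (le_of_sq_le_of_le_add hsρ hfin (hpoint 1) hform))

theorem HasSpectralGap.exists_econvPow_le (hgap : HasSpectralGap m ρ) (hm : ∑' h, m h = 1) :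
    ∃ r < 1, ∃ B ≠ ∞, ∀ n g, econvPow m n g ≤ B * r ^ n := by
  obtain ⟨s, hs1, hsρ⟩ := exists_between (ENNReal.one_lt_inv.2 hgap.lt_one)
  have hs : s ≠ ∞ := hsρ.ne_top
  have hs0 : s ≠ 0 := (one_pos.trans hs1).ne'
  have hsρ' : s * ρ < 1 := by
    rw [mul_comm, ← ENNReal.lt_div_iff_mul_lt (Or.inl hs0) (Or.inl hs), one_div]
    exact ENNReal.lt_inv_iff_lt_inv.1 hsρ
  refine ⟨s⁻¹, ENNReal.inv_lt_one.2 hs1, (1 - s * ρ)⁻¹,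
    ENNReal.inv_ne_top.2 (tsub_pos_of_lt hsρ').ne', fun n g => ?_⟩
  rw [← ENNReal.inv_pow, ← div_eq_mul_inv, ENNReal.le_div_iff_mul_le
    (Or.inl (pow_ne_zero n hs0)) (Or.inl (ENNReal.pow_ne_top hs)), mul_comm]
  exact (Finset.single_le_sum (f := fun n => s ^ n * econvPow m n g) (fun _ _ => bot_le)
    (Finset.self_mem_range_succ n)).trans (hgap.truncEGreen_le hm hs hsρ' (n + 1) g)

/- Interpolate between the uniform bound `B * r ^ n` and the moment bound `M ^ n / w g`: in the
`(k + 1)`-th power the former beats the growth of the latter. -/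
theorem HasSpectralGap.exists_egreen_mul_rpow_le (hgap : HasSpectralGap m ρ) (hm : ∑' h, m h = 1)
    (hw1 : w 1 ≤ 1) (hw : ∀ g h, w (g * h) ≤ w g * w h) (hmom : ∑' g, m g * w g ≠ ∞) :
    ∃ ε : ℝ, 0 < ε ∧ ∃ C ≠ ∞, ∀ g, egreen m g * w g ^ ε ≤ C := by
  obtain ⟨r, hr, B, hB, hbound⟩ := hgap.exists_econvPow_le hm
  set M := ∑' g, m g * w g
  obtain ⟨k, hk⟩ : ∃ k : ℕ, r ^ k * M ≤ 2⁻¹ := by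
    have hlim : Tendsto (fun k : ℕ => r ^ k * M) atTop (𝓝 0) := by
      simpa using ENNReal.Tendsto.mul_const
        (ENNReal.tendsto_pow_atTop_nhds_zero_of_lt_one hr) (Or.inr hmom)
    exact (hlim.eventually_le_const (by simp)).exists
  set ε : ℝ := ((k + 1 : ℕ) : ℝ)⁻¹
  have hε : 0 < ε := by positivity
  have hterm : ∀ n g, econvPow m n g * w g ^ ε ≤ (B ^ k) ^ ε * (2⁻¹ ^ ε) ^ n := fun n g => by
    have hroot : (B ^ k) ^ ε * (2⁻¹ ^ ε) ^ n = (B ^ k * 2⁻¹ ^ n) ^ ε := by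
      rw [ENNReal.mul_rpow_of_nonneg _ _ hε.le, ← ENNReal.rpow_natCast (2⁻¹ ^ ε),
        ← ENNReal.rpow_natCast 2⁻¹, ← ENNReal.rpow_mul, ← ENNReal.rpow_mul, mul_comm ε]
    rw [hroot, ENNReal.le_rpow_inv_iff (by positivity),
      ENNReal.mul_rpow_of_nonneg _ _ (by positivity), ENNReal.rpow_inv_rpow (by positivity),
      ENNReal.rpow_natCast]
    calc econvPow m n g ^ (k + 1) * w g
        = econvPow m n g ^ k * (econvPow m n g * w g) := by ring
      _ ≤ (B * r ^ n) ^ k * M ^ n := by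
          gcongr
          · exact hbound n g
          · exact (ENNReal.le_tsum g).trans (tsum_econvPow_mul_le hw1 hw n)
      _ = B ^ k * (r ^ k * M) ^ n := by ring
      _ ≤ B ^ k * 2⁻¹ ^ n := by gcongr
  refine ⟨ε, hε, (B ^ k) ^ ε * (1 - 2⁻¹ ^ ε)⁻¹, ENNReal.mul_ne_top (by finiteness) ?_, fun g => ?_⟩
  · exact ENNReal.inv_ne_top.2 (tsub_pos_of_lt (ENNReal.rpow_lt_one (by simp) hε)).ne'
  · rw [egreen, ← ENNReal.tsum_mul_right, ← ENNReal.tsum_geometric, ← ENNReal.tsum_mul_left]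
    exact ENNReal.tsum_le_tsum fun n => hterm n g

end GreenDecay

/-! ### First hits -/

/-- The density `μ` with values in `ℝ≥0∞`, where all the sums defining Green functions and hitting
probabilities converge. -/
def edensity {α : Type*} (μ : α → ℝ) (a : α) : ℝ≥0∞ := ENNReal.ofReal (μ a)

theorem tsum_edensity {α : Type*} {μ : α → ℝ} (hμ : IsProbDensity μ) : ∑' g, edensity μ g = 1 := by
  unfold edensity
  rw [← ENNReal.ofReal_tsum_of_nonneg hμ.1 hμ.2.summable, hμ.2.tsum_eq, ENNReal.ofReal_one]

section FirstHits

variable {m : G → ℝ≥0∞} {x y : G}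

/-- The probability that the random walk with step density `m` started at `x` ever hits `y`: the
`ℝ≥0∞`-valued counterpart of `hitProb`. -/
def ehitProb (m : G → ℝ≥0∞) (x y : G) : ℝ≥0∞ :=
  ∑' l : {l : List G // IsFirstHitPath x y l}, ((l : List G).map m).prod

theorem isFirstHitPath_nil : IsFirstHitPath x y [] ↔ x = y := by
  simp [IsFirstHitPath, walkPositions]

theorem isFirstHitPath_cons {a : G} {l : List G} :
    IsFirstHitPath x y (a :: l) ↔ x ≠ y ∧ IsFirstHitPath (x * a) y l := by
  have hne : l.scanl (fun p a => p * a) (x * a) ≠ [] := fun h => by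
    simpa using congrArg List.length h
  simp only [IsFirstHitPath, walkPositions, List.scanl_cons, List.dropLast_cons_of_ne_nil hne,
    List.getLast?_cons_of_ne_nil hne, List.mem_cons, not_or, ne_comm (a := x)]
  tauto

theorem tsum_list {α : Type*} (f : List α → ℝ≥0∞) :
    ∑' l, f l = f [] + ∑' a, ∑' l, f (a :: l) := by
  let e : PUnit.{1} ⊕ α × List α ≃ List α :=
    { toFun := Sum.elim (fun _ => []) fun p => p.1 :: p.2
      invFun := fun l => l.casesOn (.inl ⟨⟩) fun a l => .inr (a, l)
      left_inv := by rintro (_ | _) <;> rfl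
      right_inv := by rintro (_ | _) <;> rfl }
  rw [← e.tsum_eq, Summable.tsum_sum ENNReal.summable ENNReal.summable, tsum_fintype,
    Fintype.sum_unique, ENNReal.tsum_prod']
  rfl

open scoped Classical in
theorem ehitProb_eq_tsum (m : G → ℝ≥0∞) (x y : G) :
    ehitProb m x y = ∑' l : List G, if IsFirstHitPath x y l then (l.map m).prod else 0 := by
  exact tsum_subtype {l | IsFirstHitPath x y l} fun l => (l.map m).prod

theorem ehitProb_self (m : G → ℝ≥0∞) (y : G) : ehitProb m y y = 1 := by
  rw [ehitProb_eq_tsum, tsum_list]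
  simp [isFirstHitPath_nil, isFirstHitPath_cons]

theorem ehitProb_of_ne (m : G → ℝ≥0∞) (hxy : x ≠ y) :
    ehitProb m x y = ∑' h, m h * ehitProb m (x * h) y := by
  classical
  rw [ehitProb_eq_tsum, tsum_list]
  simp [ehitProb_eq_tsum, isFirstHitPath_nil, isFirstHitPath_cons, hxy, ← ENNReal.tsum_mul_left]

theorem ehitProb_mul_le {φ : G → ℝ≥0∞} {c : ℝ≥0∞} (hφ : ∀ x, ∑' h, m h * φ (x * h) ≤ φ x)
    (hc : c ≤ φ y) (x : G) : ehitProb m x y * c ≤ φ x := by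
  classical
  let T (n : ℕ) (x : G) : ℝ≥0∞ :=
    ∑' l : List G, if IsFirstHitPath x y l ∧ l.length < n then (l.map m).prod else 0
  have hT : ∀ n x, T n x * c ≤ φ x := by
    intro n
    induction n with
    | zero => simp [T]
    | succ n ih =>
      intro x
      by_cases hxy : x = y
      · have : T (n + 1) x = 1 := by
          simp only [T]
          rw [tsum_list]
          simp [isFirstHitPath_nil, isFirstHitPath_cons, hxy]
        rwa [this, one_mul, hxy]
      · have : T (n + 1) x = ∑' h, m h * T n (x * h) := by
          simp only [T]
          rw [tsum_list]
          simp [isFirstHitPath_nil, isFirstHitPath_cons, hxy, ← ENNReal.tsum_mul_left]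
        rw [this, ← ENNReal.tsum_mul_right]
        simp only [mul_assoc]
        exact (ENNReal.tsum_le_tsum fun h => mul_le_mul_right (ih _) _).trans (hφ x)
  rw [ehitProb_eq_tsum, ENNReal.tsum_eq_iSup_sum, ENNReal.iSup_mul]
  refine iSup_le fun s => le_trans ?_ (hT (s.sup List.length + 1) x)
  gcongr
  refine le_trans (Finset.sum_le_sum fun l hl => ?_) (ENNReal.sum_le_tsum s)
  have hlen : l.length < s.sup List.length + 1 := Nat.lt_succ_of_le (Finset.le_sup hl)
  simp [hlen]

theorem egreen_le {φ : G → ℝ≥0∞} (hφ : ∀ g, econvPow m 0 g + ∑' h, m h * φ (h⁻¹ * g) ≤ φ g)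
    (g : G) : egreen m g ≤ φ g := by
  have htrunc : ∀ N g, truncEGreen m 1 N g ≤ φ g := by
    intro N
    induction N with
    | zero => simp [truncEGreen]
    | succ N ih =>
      intro g
      rw [truncEGreen_succ, one_mul]
      refine le_trans ?_ (hφ g)
      gcongr
      exact ih _
  rw [egreen, ENNReal.tsum_eq_iSup_nat]
  exact iSup_le fun N => by simpa [truncEGreen] using htrunc N g

theorem ehitProb_mul_egreen_le (m : G → ℝ≥0∞) (x y z : G) :
    ehitProb m x y * egreen m (y⁻¹ * z) ≤ egreen m (x⁻¹ * z) := by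
  refine ehitProb_mul_le (φ := fun x => egreen m (x⁻¹ * z)) (fun x => ?_) le_rfl x
  simp only [mul_inv_rev, mul_assoc]
  rw [egreen_eq m (x⁻¹ * z)]
  exact le_add_self

theorem ehitProb_mul_egreen_one (m : G → ℝ≥0∞) (x y : G) :
    ehitProb m x y * egreen m 1 = egreen m (x⁻¹ * y) := by
  refine le_antisymm (by simpa using ehitProb_mul_egreen_le m x y y) ?_
  suffices h : ∀ g, egreen m g ≤ ehitProb m (y * g⁻¹) y * egreen m 1 by simpa using h (x⁻¹ * y)
  refine egreen_le fun g => ?_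
  by_cases hg : g = 1
  · rw [hg, inv_one, mul_one, ehitProb_self, one_mul]
    conv_rhs => rw [egreen_eq]
    gcongr with h
    simpa [mul_assoc] using ehitProb_mul_egreen_le m (y * h) y y
  · rw [econvPow_zero_of_ne m hg, zero_add, ehitProb_of_ne m (by simpa using hg),
      ← ENNReal.tsum_mul_right]
    simp [mul_assoc]

theorem hitProb_eq_toReal {μ : G → ℝ} (hμ : ∀ g, 0 ≤ μ g) (x y : G) :
    hitProb μ x y = (ehitProb (edensity μ) x y).toReal := by
  have hprod (l : List G) : (l.map (edensity μ)).prod = ENNReal.ofReal (l.map μ).prod := by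
    induction l with
    | nil => simp
    | cons a l ih => simp [ih, edensity, ENNReal.ofReal_mul (hμ a)]
  have hpos (l : List G) : 0 ≤ (l.map μ).prod := List.prod_nonneg (by simpa using fun a _ => hμ a)
  simp only [ehitProb, hprod]
  rw [ENNReal.tsum_toReal_eq fun _ => ENNReal.ofReal_ne_top, hitProb]
  exact tsum_congr fun l => (ENNReal.toReal_ofReal (hpos l)).symm

end FirstHits

/-! ### The Green metric -/

section GreenMetric

variable {m : G → ℝ≥0∞}

theorem one_le_egreen_one (m : G → ℝ≥0∞) : 1 ≤ egreen m 1 := by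
  rw [egreen_eq, econvPow_zero_one]
  exact le_self_add

theorem egreen_one_ne_zero (m : G → ℝ≥0∞) : egreen m 1 ≠ 0 :=
  (zero_lt_one.trans_le (one_le_egreen_one m)).ne'

theorem egreen_mul_egreen_le (m : G → ℝ≥0∞) (a b : G) :
    egreen m a * egreen m b ≤ egreen m (a * b) * egreen m 1 := by
  have heq := ehitProb_mul_egreen_one m 1 a
  have hle := ehitProb_mul_egreen_le m 1 a (a * b)
  rw [inv_one, one_mul] at heq hle
  rw [inv_mul_cancel_left] at hle
  rw [← heq, mul_right_comm]
  gcongr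

theorem egreen_le_egreen_one (hs : ∀ g, m g⁻¹ = m g) (g : G) : egreen m g ≤ egreen m 1 := by
  have h := egreen_mul_egreen_le m g g⁻¹
  rw [egreen_inv hs, mul_inv_cancel] at h
  by_contra! hlt
  exact absurd h (not_le.2 (ENNReal.mul_lt_mul hlt hlt))

theorem egreen_ne_zero (hs : ∀ g, m g⁻¹ = m g) (hgen : Subgroup.closure {g : G | m g ≠ 0} = ⊤)
    (g : G) : egreen m g ≠ 0 := by
  induction hgen ▸ Subgroup.mem_top g using Subgroup.closure_induction with
  | mem x hx =>
    have h : m x * egreen m 1 ≤ egreen m x := by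
      rw [egreen_eq m x]
      exact le_add_left (by simpa using ENNReal.le_tsum (f := fun h => m h * egreen m (h⁻¹ * x)) x)
    exact ((mul_ne_zero hx (egreen_one_ne_zero m)).bot_lt.trans_le h).ne'
  | one => exact egreen_one_ne_zero m
  | mul x y _ _ hx hy =>
    exact left_ne_zero_of_mul ((mul_ne_zero hx hy).bot_lt.trans_le (egreen_mul_egreen_le m x y)).ne'
  | inv x _ hx => rwa [egreen_inv hs]

/- If `egreen m g = egreen m 1`, then `egreen m` is invariant under right translation by `g`, so the
recursion `egreen_eq` takes the same values at `1` and `g` except for its initial term. -/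
theorem egreen_lt_egreen_one (hs : ∀ g, m g⁻¹ = m g) (hfin : egreen m 1 ≠ ∞) {g : G} (hg : g ≠ 1) :
    egreen m g < egreen m 1 := by
  refine (egreen_le_egreen_one hs g).lt_of_ne fun heq => ?_
  have hle : ∀ k h, egreen m h = egreen m 1 → egreen m k ≤ egreen m (k * h) := fun k h hh =>
    (ENNReal.mul_le_mul_iff_left (egreen_one_ne_zero m) hfin).1 (hh ▸ egreen_mul_egreen_le m k h)
  have hinv : ∀ k, egreen m (k * g) = egreen m (k * 1) := fun k => by
    rw [mul_one]
    refine le_antisymm ?_ (hle k g heq)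
    simpa using hle (k * g) g⁻¹ (by rw [egreen_inv hs, heq])
  have hg_rec := egreen_eq m g
  have hone_rec := egreen_eq m 1
  rw [econvPow_zero_of_ne m hg, zero_add] at hg_rec
  simp only [hinv] at hg_rec
  rw [← hg_rec, heq, econvPow_zero_one, add_comm] at hone_rec
  exact (ENNReal.lt_add_right hfin one_ne_zero).ne hone_rec

variable {μ : G → ℝ}

theorem edensity_inv (hμs : IsSymmetric μ) (g : G) : edensity μ g⁻¹ = edensity μ g := by
  rw [edensity, hμs g, edensity]

theorem closure_edensity_ne_zero (hμ : ∀ g, 0 ≤ μ g) (hgen : GeneratesSupp μ) :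
    Subgroup.closure {g : G | edensity μ g ≠ 0} = ⊤ := by
  have hsupp : {g : G | edensity μ g ≠ 0} = {g : G | μ g ≠ 0} := by
    ext g
    simp [edensity, (hμ g).lt_iff_ne']
  rw [hsupp]
  exact hgen

theorem hitProb_eq_div (hμ : ∀ g, 0 ≤ μ g) (hfin : egreen (edensity μ) 1 ≠ ∞) (x y : G) :
    hitProb μ x y = (egreen (edensity μ) (x⁻¹ * y)).toReal / (egreen (edensity μ) 1).toReal := by
  have hpos := ENNReal.toReal_pos (egreen_one_ne_zero (edensity μ)) hfin
  rw [hitProb_eq_toReal hμ, eq_div_iff hpos.ne', ← ENNReal.toReal_mul, ehitProb_mul_egreen_one]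

theorem toReal_egreen_pos (hμ : ∀ g, 0 ≤ μ g) (hμs : IsSymmetric μ) (hgen : GeneratesSupp μ)
    (hfin : egreen (edensity μ) 1 ≠ ∞) (g : G) : 0 < (egreen (edensity μ) g).toReal :=
  ENNReal.toReal_pos (egreen_ne_zero (edensity_inv hμs) (closure_edensity_ne_zero hμ hgen) g)
    (ne_top_of_le_ne_top hfin (egreen_le_egreen_one (edensity_inv hμs) g))

theorem hitProb_pos (hμ : ∀ g, 0 ≤ μ g) (hμs : IsSymmetric μ) (hgen : GeneratesSupp μ)
    (hfin : egreen (edensity μ) 1 ≠ ∞) (x y : G) : 0 < hitProb μ x y := by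
  rw [hitProb_eq_div hμ hfin]
  exact div_pos (toReal_egreen_pos hμ hμs hgen hfin _) (toReal_egreen_pos hμ hμs hgen hfin _)

theorem greenDist_eq (hμ : ∀ g, 0 ≤ μ g) (hμs : IsSymmetric μ) (hgen : GeneratesSupp μ)
    (hfin : egreen (edensity μ) 1 ≠ ∞) (x y : G) :
    greenDist μ x y = Real.log (egreen (edensity μ) 1).toReal -
      Real.log (egreen (edensity μ) (x⁻¹ * y)).toReal := by
  have hpos := toReal_egreen_pos hμ hμs hgen hfin
  rw [greenDist, hitProb_eq_div hμ hfin, Real.log_div (hpos _).ne' (hpos _).ne', neg_sub]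

theorem isInvMetric_greenDist (hμ : ∀ g, 0 ≤ μ g) (hμs : IsSymmetric μ) (hgen : GeneratesSupp μ)
    (hfin : egreen (edensity μ) 1 ≠ ∞) : IsInvMetric (greenDist μ) := by
  have hpos := toReal_egreen_pos hμ hμs hgen hfin
  have htop : ∀ g, egreen (edensity μ) g ≠ ∞ := fun g => (ENNReal.toReal_pos_iff.1 (hpos g)).2.ne
  rw [funext₂ (greenDist_eq hμ hμs hgen hfin)]
  refine isInvMetric_of_length (len := fun g => Real.log (egreen (edensity μ) 1).toReal -
    Real.log (egreen (edensity μ) g).toReal) (sub_self _) (fun g hg => ?_)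
    (fun g => by rw [egreen_inv (edensity_inv hμs)]) fun g h => ?_
  · exact sub_pos.2 (Real.log_lt_log (hpos g)
      (ENNReal.toReal_strict_mono hfin (egreen_lt_egreen_one (edensity_inv hμs) hfin hg)))
  · have hmul := ENNReal.toReal_mono (ENNReal.mul_ne_top (htop _) hfin)
      (egreen_mul_egreen_le (edensity μ) g h)
    rw [ENNReal.toReal_mul, ENNReal.toReal_mul] at hmul
    have hlog := Real.log_le_log (mul_pos (hpos g) (hpos h)) hmul
    rw [Real.log_mul (hpos g).ne' (hpos h).ne', Real.log_mul (hpos _).ne' (hpos 1).ne'] at hlog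
    linarith

theorem exists_egreen_mul_exp_le (hG : NonElemHyperbolic G) {S : Finset G} (hS : Generates S)
    (hμ : IsProbDensity μ) (hgen : GeneratesSupp μ) (hexp : HasExpMoment (wordDist S) μ) :
    ∃ ε : ℝ, 0 < ε ∧ ∃ C, C ≠ ∞ ∧ ∀ g,
      egreen (edensity μ) g * ENNReal.ofReal (Real.exp (ε * wordLength S g)) ≤ C := by
  obtain ⟨a, b, A, A', B, B', hab⟩ := hG.exists_isPingPong
  obtain ⟨ρ, hgap⟩ := hab.exists_hasSpectralGap (tsum_edensity hμ)
    (closure_edensity_ne_zero hμ.1 hgen)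
  obtain ⟨lam, hlam, hsum⟩ := hexp
  have hmom : ∑' g, edensity μ g * ENNReal.ofReal (Real.exp (lam * wordLength S g)) ≠ ∞ := by
    have hterm (g : G) : edensity μ g * ENNReal.ofReal (Real.exp (lam * wordLength S g)) =
        ENNReal.ofReal (Real.exp (lam * wordDist S 1 g) * μ g) := by
      rw [wordDist, inv_one, one_mul, edensity, mul_comm, ENNReal.ofReal_mul (Real.exp_pos _).le]
    simp only [hterm]
    exact hsum.tsum_ofReal_ne_top
  have hsubmul (g h : G) : ENNReal.ofReal (Real.exp (lam * wordLength S (g * h))) ≤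
      ENNReal.ofReal (Real.exp (lam * wordLength S g)) *
        ENNReal.ofReal (Real.exp (lam * wordLength S h)) := by
    rw [← ENNReal.ofReal_mul (Real.exp_pos _).le, ← Real.exp_add, ← mul_add]
    gcongr
    exact_mod_cast wordLength_mul_le hS g h
  obtain ⟨ε, hε, C, hC, hdecay⟩ := hgap.exists_egreen_mul_rpow_le (tsum_edensity hμ)
    (w := fun g => ENNReal.ofReal (Real.exp (lam * wordLength S g)))
    (by simp [wordLength_one]) hsubmul hmom
  refine ⟨lam * ε, mul_pos hlam hε, C, hC, fun g => ?_⟩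
  rw [mul_right_comm, Real.exp_mul, ← ENNReal.ofReal_rpow_of_pos (Real.exp_pos _)]
  exact hdecay g

theorem egreen_one_ne_top (hG : NonElemHyperbolic G) {S : Finset G} (hS : Generates S)
    (hμ : IsProbDensity μ) (hgen : GeneratesSupp μ) (hexp : HasExpMoment (wordDist S) μ) :
    egreen (edensity μ) 1 ≠ ∞ := by
  obtain ⟨ε, -, C, hC, hdecay⟩ := exists_egreen_mul_exp_le hG hS hμ hgen hexp
  exact ne_top_of_le_ne_top hC (by simpa [wordLength_one] using hdecay 1)

theorem exists_mul_wordDist_sub_le_greenDist (hG : NonElemHyperbolic G) {S : Finset G}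
    (hS : Generates S) (hμ : IsProbDensity μ) (hμs : IsSymmetric μ) (hgen : GeneratesSupp μ)
    (hexp : HasExpMoment (wordDist S) μ) :
    ∃ ε : ℝ, 0 < ε ∧ ∃ c, ∀ x y, ε * wordDist S x y - c ≤ greenDist μ x y := by
  obtain ⟨ε, hε, C, hC, hdecay⟩ := exists_egreen_mul_exp_le hG hS hμ hgen hexp
  have hfin := egreen_one_ne_top hG hS hμ hgen hexp
  have hpos := toReal_egreen_pos hμ.1 hμs hgen hfin
  refine ⟨ε, hε, Real.log C.toReal - Real.log (egreen (edensity μ) 1).toReal, fun x y => ?_⟩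
  have hle := ENNReal.toReal_mono hC (hdecay (x⁻¹ * y))
  rw [ENNReal.toReal_mul, ENNReal.toReal_ofReal (Real.exp_pos _).le] at hle
  have hlog := Real.log_le_log (mul_pos (hpos _) (Real.exp_pos _)) hle
  rw [Real.log_mul (hpos _).ne' (Real.exp_pos _).ne', Real.log_exp] at hlog
  rw [greenDist_eq hμ.1 hμs hgen hfin, wordDist]
  linarith

theorem exists_qiEmbed_greenDist (hG : NonElemHyperbolic G) {S : Finset G}
    (hS : Generates S) (hμ : IsProbDensity μ) (hμs : IsSymmetric μ) (hgen : GeneratesSupp μ)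
    (hexp : HasExpMoment (wordDist S) μ) :
    ∃ Λ c : ℝ, 1 ≤ Λ ∧ 0 ≤ c ∧ QIEmbed (wordDist S) (greenDist μ) id Λ c := by
  obtain ⟨ε, hε, c, hlower⟩ := exists_mul_wordDist_sub_le_greenDist hG hS hμ hμs hgen hexp
  obtain ⟨L, hupper⟩ := (isInvMetric_greenDist hμ.1 hμs hgen
    (egreen_one_ne_top hG hS hμ hgen hexp)).exists_dist_le_mul_wordDist hS
  have hΛL : L ≤ max 1 (max L ε⁻¹) := (le_max_left _ _).trans (le_max_right _ _)
  have hΛε : ε⁻¹ ≤ max 1 (max L ε⁻¹) := (le_max_right _ _).trans (le_max_right _ _)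
  refine ⟨max 1 (max L ε⁻¹), max 0 c, le_max_left _ _, le_max_left _ _, fun x y => ⟨?_, ?_⟩⟩
  · have hn : 0 ≤ wordDist S x y := Nat.cast_nonneg _
    have hdiv : wordDist S x y / max 1 (max L ε⁻¹) ≤ wordDist S x y / ε⁻¹ := by gcongr
    rw [div_inv_eq_mul, mul_comm] at hdiv
    exact le_trans (by gcongr; exact le_max_right _ _) (hlower x y)
  · have hn : 0 ≤ wordDist S x y := Nat.cast_nonneg _
    exact (hupper x y).trans ((mul_le_mul_of_nonneg_right hΛL hn).trans
      (le_add_of_nonneg_right (le_max_left _ _)))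

end GreenMetric

/-! ### From Ancona's inequality to hyperbolicity -/

section Hyperbolicity

theorem IsMetricFun.gromov_le_gromov_add_of_quasiruler {X : Type*} {d : X → X → ℝ}
    (hd : IsMetricFun d) {w x y z p : X} {K : ℝ} (hwy : gromov d p w y ≤ K)
    (hwz : gromov d p w z ≤ K) (hxy : gromov d p x y ≤ K) :
    gromov d w x y ≤ gromov d w y z + 3 * K := by
  unfold gromov at *
  linarith [hd.triangle x p w, hd.triangle y p w, hd.triangle y p z, hd.symm p w, hd.symm p z,
    hd.symm w y, hd.symm w z]

theorem IsMetricFun.dist_le_dist_sub_of_le_gromov {X : Type*} {d : X → X → ℝ} {δ : ℝ}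
    (hd : IsMetricFun d) (hh : IsHyperbolicWith d δ) {w x y p : X}
    (hp : d w p + d p x = d w x) (hle : d w p ≤ gromov d w x y) :
    d p y ≤ d w y - d w p + 2 * δ := by
  have hproj := hh.gromov_le_or w x p y
  unfold gromov at hle hproj
  rcases hproj with h | h <;>
    linarith [hd.symm w p, hd.symm w x, hd.symm w y, hd.symm x p]

variable {S : Finset G} {δ : ℝ}

theorem NearWordGeodesic.of_dist (hS : Generates S) {x y u : G} {r : ℝ}
    (hu : NearWordGeodesic S x y u r) (v : G) :
    NearWordGeodesic S x y v (wordDist S v u + r) := by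
  obtain ⟨n, p, hp, hx, hy, i, hi, hdist⟩ := hu
  exact ⟨n, p, hp, hx, hy, i, hi,
    ((isInvMetric_wordDist hS).triangle v u (p i)).trans (by gcongr)⟩

theorem exists_nearWordGeodesic_dist_le_gromov (hS : Generates S) (w x y : G) :
    ∃ p, NearWordGeodesic S w x p 0 ∧ wordDist S w p + wordDist S p x = wordDist S w x ∧
      wordDist S w p ≤ gromov (wordDist S) w x y ∧
      gromov (wordDist S) w x y ≤ wordDist S w p + 1 := by
  have hd := isInvMetric_wordDist hS
  obtain ⟨q, hq, hw, hx⟩ := exists_isWordGeodesic hS w x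
  set n := wordLength S (w⁻¹ * x)
  have hT := hd.gromov_nonneg w x y
  have hle : ⌊gromov (wordDist S) w x y⌋₊ ≤ n :=
    Nat.floor_le_of_le (hd.gromov_le_dist w x y)
  have hwq := hq 0 _ n.zero_le hle
  have hqx := hq _ n hle le_rfl
  have hwx := hq 0 n n.zero_le le_rfl
  rw [hw, Nat.cast_zero, zero_sub, abs_neg, Nat.abs_cast] at hwq hwx
  rw [abs_sub_comm, abs_of_nonneg (sub_nonneg.2 (Nat.cast_le.2 hle))] at hqx
  rw [hx] at hqx hwx
  refine ⟨q ⌊gromov (wordDist S) w x y⌋₊, ⟨n, q, hq, hw, hx, _, hle, (hd.refl _).le⟩, ?_, ?_, ?_⟩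
  · rw [hwq, hqx, hwx]; ring
  · exact hwq.trans_le (Nat.floor_le hT)
  · exact hwq ▸ (Nat.lt_floor_add_one _).le

theorem nearWordGeodesic_of_gromov_le (hS : Generates S)
    (hh : IsHyperbolicWith (wordDist S) δ) {x y v : G} {r : ℝ}
    (hv : gromov (wordDist S) v x y ≤ r) : NearWordGeodesic S x y v (r + 2 * δ + 1) := by
  have hd := isInvMetric_wordDist hS
  obtain ⟨p, hp, hsplit, hle, hge⟩ := exists_nearWordGeodesic_dist_le_gromov hS x y v
  obtain ⟨n, q, hq, hx, hy, i, hi, hdist⟩ := hp.of_dist hS v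
  refine ⟨n, q, hq, hx, hy, i, hi, hdist.trans ?_⟩
  have hpv := hd.dist_le_dist_sub_of_le_gromov hh hsplit hle
  unfold gromov at hv hge
  linarith [hd.symm v p, hd.symm v x, hd.symm x y]

/-- Neighbours of word geodesics have bounded Gromov products for `d`, that is, word geodesics
are quasirulers of `d`. For the Green metric this is Ancona's inequality. -/
def IsRuledByWordGeodesics (S : Finset G) (d : G → G → ℝ) : Prop :=
  ∀ r : ℝ, 0 ≤ r → ∃ K, ∀ x y v, NearWordGeodesic S x y v r → gromov d v x y ≤ K

/- The word-metric projection `p` of `y` to the geodesic `[w, x]` lies near all the geodesics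
`[w, y]`, `[w, z]`, `[x, y]`, hence is a coarse branching point for `d` as well. -/
theorem IsRuledByWordGeodesics.isHyperbolic {d : G → G → ℝ} (hruled : IsRuledByWordGeodesics S d)
    (hd : IsMetricFun d) (hS : Generates S) (hh : IsHyperbolic (wordDist S)) :
    IsHyperbolic d := by
  obtain ⟨δ, hδ, hh⟩ := hh
  have hw := isInvMetric_wordDist hS
  obtain ⟨K, hK⟩ := hruled (1 + δ + 2 * δ + 1) (by positivity)
  have hnear {x y p : G} (hp : gromov (wordDist S) p x y ≤ 1 + δ) : gromov d p x y ≤ K :=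
    hK x y p (nearWordGeodesic_of_gromov_le hS hh hp)
  have hbranch {w x y z : G}
      (hle : gromov (wordDist S) w x y ≤ gromov (wordDist S) w x z) :
      gromov d w x y ≤ gromov d w y z + 3 * K := by
    obtain ⟨p, -, hsplit, hpy, hyp⟩ := exists_nearWordGeodesic_dist_le_gromov hS w x y
    have hdy := hw.dist_le_dist_sub_of_le_gromov hh hsplit hpy
    have hdz := hw.dist_le_dist_sub_of_le_gromov hh hsplit (hpy.trans hle)
    refine hd.gromov_le_gromov_add_of_quasiruler (p := p) (hnear ?_) (hnear ?_) (hnear ?_) <;>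
      unfold gromov at hyp ⊢ <;>
      linarith [hw.symm p w, hw.symm p x, hw.symm p y, hw.symm p z, hw.symm w x, hw.symm w y,
        hw.symm w z]
  have hK0 : 0 ≤ K := (hd.gromov_nonneg 1 1 1).trans <| hnear <|
    ((hw.gromov_le_dist 1 1 1).trans_eq (hw.refl 1)).trans (by positivity)
  refine ⟨3 * K, by positivity, fun w x y z => sub_le_iff_le_add.2 (min_le_iff.2 ?_)⟩
  rcases le_total (gromov (wordDist S) w x y) (gromov (wordDist S) w x z) with h | h
  · exact Or.inl (hbranch h)
  · exact Or.inr (hd.gromov_comm w y z ▸ hbranch h)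

end Hyperbolicity

/-! ### Virtual points and the Morse lemma -/

section VirtualPoint

/-- The distance from `q` to a virtual point of a geodesic from `w` to `z`, at distance `t` from
`w`. It replaces geodesics in discrete spaces: adjoining the point preserves the four-point
inequality. -/
def virtualDist {X : Type*} (d : X → X → ℝ) (w z : X) (t : ℝ) (q : X) : ℝ :=
  max (d w q - t) (d z q - (d w z - t))

/-- The Gromov product of `a` and `b` seen from the virtual point of `virtualDist d w z t`. -/
def virtualGromov {X : Type*} (d : X → X → ℝ) (w z : X) (t : ℝ) (a b : X) : ℝ :=
  (virtualDist d w z t a + virtualDist d w z t b - d a b) / 2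

variable {X : Type*} {d : X → X → ℝ} {δ : ℝ} {w z : X} {t : ℝ}

theorem dist_left_le_virtualDist_add (d : X → X → ℝ) (w z : X) (t : ℝ) (q : X) :
    d w q ≤ virtualDist d w z t q + t :=
  sub_le_iff_le_add.1 (le_max_left _ _)

theorem dist_right_le_virtualDist_add (d : X → X → ℝ) (w z : X) (t : ℝ) (q : X) :
    d z q ≤ virtualDist d w z t q + (d w z - t) :=
  sub_le_iff_le_add.1 (le_max_right _ _)

theorem continuous_virtualDist (d : X → X → ℝ) (w z : X) (q : X) :
    Continuous fun t => virtualDist d w z t q := by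
  unfold virtualDist
  fun_prop

theorem virtualDist_le_virtualDist_add_abs (d : X → X → ℝ) (w z : X) (s t : ℝ) (q : X) :
    virtualDist d w z t q ≤ virtualDist d w z s q + |s - t| := by
  have hw := dist_left_le_virtualDist_add d w z s q
  have hz := dist_right_le_virtualDist_add d w z s q
  exact max_le (by linarith [le_abs_self (s - t)]) (by linarith [neg_abs_le (s - t)])

namespace IsMetricFun

theorem virtualDist_swap (hd : IsMetricFun d) (w z : X) (t : ℝ) :
    virtualDist d z w (d w z - t) = virtualDist d w z t := by
  funext q
  rw [virtualDist, virtualDist, hd.symm z w, sub_sub_cancel, max_comm]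

theorem virtualGromov_swap (hd : IsMetricFun d) (w z : X) (t : ℝ) :
    virtualGromov d z w (d w z - t) = virtualGromov d w z t := by
  funext a b
  rw [virtualGromov, virtualGromov, hd.virtualDist_swap]

theorem virtualGromov_comm (hd : IsMetricFun d) (a b : X) :
    virtualGromov d w z t a b = virtualGromov d w z t b a := by
  rw [virtualGromov, virtualGromov, hd.symm a b]
  ring

theorem virtualGromov_self (hd : IsMetricFun d) (a : X) :
    virtualGromov d w z t a a = virtualDist d w z t a := by
  rw [virtualGromov, hd.refl]
  ring

theorem virtualDist_left (hd : IsMetricFun d) (ht : 0 ≤ t) : virtualDist d w z t w = t := by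
  rw [virtualDist, hd.refl, hd.symm z w, zero_sub, sub_sub_cancel, max_eq_right]
  linarith

theorem virtualGromov_left_right (hd : IsMetricFun d) (ht : t ∈ Icc 0 (d w z)) :
    virtualGromov d w z t w z = 0 := by
  have hz := hd.virtualDist_left (w := z) (z := w) (sub_nonneg.2 ht.2)
  rw [hd.virtualDist_swap] at hz
  rw [virtualGromov, hd.virtualDist_left ht.1, hz]
  ring

theorem virtualDist_nonneg (hd : IsMetricFun d) (q : X) : 0 ≤ virtualDist d w z t q := by
  linarith [dist_left_le_virtualDist_add d w z t q,
    dist_right_le_virtualDist_add d w z t q,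
    hd.triangle w q z, hd.symm z q]

theorem dist_le_virtualDist_add (hd : IsMetricFun d) (hh : IsHyperbolicWith d δ) (w z : X) (t : ℝ)
    (a b : X) : d a b ≤ virtualDist d w z t a + virtualDist d w z t b + 2 * δ := by
  have hwa := dist_left_le_virtualDist_add d w z t a
  have hwb := dist_left_le_virtualDist_add d w z t b
  have hza := dist_right_le_virtualDist_add d w z t a
  have hzb := dist_right_le_virtualDist_add d w z t b
  have hmax := hd.four_point hh w z a b
  have hle : max (d w a + d z b) (d w b + d z a) ≤
      virtualDist d w z t a + virtualDist d w z t b + d w z :=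
    max_le (by linarith) (by linarith)
  linarith

theorem min_virtualGromov_le (hd : IsMetricFun d) (hh : IsHyperbolicWith d δ) (w z : X) (t : ℝ)
    (a b c : X) :
    min (virtualGromov d w z t a b) (virtualGromov d w z t b c) ≤
      virtualGromov d w z t a c + δ := by
  have hwa := dist_left_le_virtualDist_add d w z t a
  have hwc := dist_left_le_virtualDist_add d w z t c
  have hza := dist_right_le_virtualDist_add d w z t a
  have hzc := dist_right_le_virtualDist_add d w z t c
  set φ := virtualDist d w z t
  have hside {u : X} {s : ℝ} (ha : d u a ≤ φ a + s) (hc : d u c ≤ φ c + s)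
      (hb : φ b = d u b - s) :
      φ b + d a c ≤ max (φ a + d b c) (φ c + d a b) + 2 * δ := by
    have hle : max (d u a + d b c) (d u c + d b a) ≤ max (φ a + d b c) (φ c + d a b) + s := by
      rw [← max_add_add_right, hd.symm b a]
      exact max_le_max (by linarith) (by linarith)
    linarith [hd.four_point hh u b a c]
  have hfour : φ b + d a c ≤ max (φ a + d b c) (φ c + d a b) + 2 * δ :=
    (max_choice (d w b - t) (d z b - (d w z - t))).elim (hside hwa hwc) (hside hza hzc)
  rw [← sub_le_iff_le_add, le_max_iff] at hfour
  simp only [virtualGromov]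
  rcases hfour with h | h
  · exact (min_le_right _ _).trans (by linarith)
  · exact (min_le_left _ _).trans (by linarith)

theorem exists_virtualDist_le_and_le_virtualGromov_left (hd : IsMetricFun d) {P : Set X} {D : ℝ}
    (ht : t ∈ Icc 0 (d w z)) (hw : w ∈ P)
    (hnear : ∀ s ∈ Icc 0 (d w z), ∃ q ∈ P, virtualDist d w z s q ≤ D)
    (hfar : ∀ q ∈ P, D ≤ virtualDist d w z t q) :
    ∃ q ∈ P, virtualDist d w z t q ≤ 3 * D ∧ D ≤ virtualGromov d w z t w q := by
  obtain ⟨q₀, -, hD⟩ := hnear t ht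
  have hD0 : 0 ≤ D := (hd.virtualDist_nonneg q₀).trans hD
  rcases le_total (2 * D) t with htD | htD
  · obtain ⟨q, hq, hqD⟩ := hnear (t - 2 * D) ⟨by linarith, by linarith [ht.2]⟩
    have hle := virtualDist_le_virtualDist_add_abs d w z (t - 2 * D) t q
    have hwq := dist_left_le_virtualDist_add d w z (t - 2 * D) q
    rw [sub_sub_cancel_left, abs_neg, abs_of_nonneg (by positivity)] at hle
    refine ⟨q, hq, by linarith, ?_⟩
    rw [virtualGromov, hd.virtualDist_left ht.1]
    linarith [hfar q hq]
  · refine ⟨w, hw, ?_, (hfar w hw).trans_eq (hd.virtualGromov_self w).symm⟩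
    rw [hd.virtualDist_left ht.1]
    linarith

theorem exists_virtualDist_le_and_le_virtualGromov_right (hd : IsMetricFun d) {P : Set X}
    {D : ℝ} (ht : t ∈ Icc 0 (d w z)) (hz : z ∈ P)
    (hnear : ∀ s ∈ Icc 0 (d w z), ∃ q ∈ P, virtualDist d w z s q ≤ D)
    (hfar : ∀ q ∈ P, D ≤ virtualDist d w z t q) :
    ∃ q ∈ P, virtualDist d w z t q ≤ 3 * D ∧ D ≤ virtualGromov d w z t q z := by
  have hswap {s : ℝ} (hs : s ∈ Icc 0 (d w z)) : d w z - s ∈ Icc 0 (d w z) :=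
    ⟨sub_nonneg.2 hs.2, sub_le_self _ hs.1⟩
  have hleft := hd.exists_virtualDist_le_and_le_virtualGromov_left (w := z) (z := w)
    (t := d w z - t) (P := P) (D := D) (hd.symm z w ▸ hswap ht) hz (fun s hs => ?_) ?_
  · rw [hd.virtualDist_swap, hd.virtualGromov_swap] at hleft
    simpa only [hd.virtualGromov_comm z] using hleft
  · rw [hd.symm z w] at hs
    rw [← sub_sub_cancel (d w z) s, hd.virtualDist_swap]
    exact hnear _ (hswap hs)
  · rwa [hd.virtualDist_swap]

end IsMetricFun

end VirtualPoint

section Morse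

theorem le_add_of_chain {X : Type*} {g : X → X → ℝ} {δ B : ℝ} (hδ : 0 ≤ δ)
    (hg : ∀ a b c, min (g a b) (g b c) ≤ g a c + δ) (q : ℕ → X) (k : ℕ) :
    ∀ i j : ℕ, i < j → j ≤ i + 2 ^ k → (∀ l, i ≤ l → l < j → B ≤ g (q l) (q (l + 1))) →
      B ≤ g (q i) (q j) + δ * k := by
  induction k with
  | zero =>
    intro i j hij hjk hstep
    obtain rfl : j = i + 1 := by omega
    simpa using hstep i le_rfl i.lt_succ_self
  | succ k ih =>
    intro i j hij hjk hstep
    rw [pow_succ, mul_two] at hjk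
    push_cast
    rcases le_or_gt j (i + 2 ^ k) with hj | hj
    · linarith [ih i j hij hj hstep, hδ]
    · have hfst := ih i (i + 2 ^ k) (by simp) le_rfl fun l hl hl' => hstep l hl (by omega)
      have hsnd := ih (i + 2 ^ k) j hj (by omega) fun l hl hl' => hstep l (by omega) hl'
      have hmin := hg (q i) (q (i + 2 ^ k)) (q j)
      rw [min_le_iff] at hmin
      rcases hmin with h | h <;> linarith

theorem eventually_linear_le_two_pow (a b : ℝ) : ∀ᶠ n : ℕ in atTop, a * n + b ≤ 2 ^ n := by
  have hpow (k : ℕ) := tendsto_pow_const_div_const_pow_of_one_lt k (one_lt_two (α := ℝ))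
  have hlim := ((hpow 1).const_mul a).add ((hpow 0).const_mul b)
  simp only [mul_zero, add_zero, pow_one, pow_zero] at hlim
  filter_upwards [hlim.eventually_le_const one_pos] with n hn
  rw [mul_div_assoc', mul_div_assoc', ← add_div, div_le_one (by positivity), mul_one] at hn
  exact hn

/- Linear growth loses against exponential growth. -/
theorem exists_le_of_forall_le_two_pow {A : ℝ} (hA : 0 ≤ A) (B δ C : ℝ) :
    ∃ D₀, ∀ D, (∀ k : ℕ, A * D + B ≤ 2 ^ k → D ≤ δ * k + C) → D ≤ D₀ := by
  obtain ⟨k₀, hk₀⟩ := eventually_atTop.1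
    (eventually_linear_le_two_pow (A * δ) (A * (δ + C) + B))
  refine ⟨δ * k₀ + C, fun D hD => ?_⟩
  have hdescend (k : ℕ) (hk : k₀ ≤ k) (hDk : D ≤ δ * (k + 1 : ℕ) + C) : D ≤ δ * k + C := by
    refine hD k (le_trans ?_ (hk₀ k hk))
    push_cast at hDk
    linarith [mul_le_mul_of_nonneg_left hDk hA]
  obtain ⟨k, hk, hDk⟩ : ∃ k ≥ k₀, D ≤ δ * k + C := by
    obtain ⟨k, hk, hDk⟩ := ((eventually_ge_atTop k₀).and
      (eventually_linear_le_two_pow 0 (A * D + B))).exists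
    exact ⟨k, hk, hD k (by simpa using hDk)⟩
  induction k, hk using Nat.le_induction with
  | base => exact hDk
  | succ k hk ih => exact ih (hdescend k hk hDk)

/-- A finite discrete quasigeodesic `q 0, …, q n` for the distance function `d`. -/
def IsDiscreteQuasigeodesic {X : Type*} (d : X → X → ℝ) (n : ℕ) (q : ℕ → X) (Λ c : ℝ) : Prop :=
  ∀ i j : ℕ, i ≤ n → j ≤ n → |(i : ℝ) - j| / Λ - c ≤ d (q i) (q j) ∧
    d (q i) (q j) ≤ Λ * |(i : ℝ) - j| + c

variable {X : Type*} {d : X → X → ℝ} {δ Λ c : ℝ} {n : ℕ} {q : ℕ → X}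

namespace IsDiscreteQuasigeodesic

theorem dist_succ_le (hq : IsDiscreteQuasigeodesic d n q Λ c) {i : ℕ} (hi : i < n) :
    d (q i) (q (i + 1)) ≤ Λ + c := by
  simpa using (hq i (i + 1) hi.le hi).2

theorem abs_sub_le (hq : IsDiscreteQuasigeodesic d n q Λ c) (hΛ : 0 < Λ) {i j : ℕ} (hi : i ≤ n)
    (hj : j ≤ n) : |(i : ℝ) - j| ≤ Λ * (d (q i) (q j) + c) :=
  (div_le_iff₀' hΛ).1 (sub_le_iff_le_add.1 (hq i j hi hj).1)

theorem le_virtualGromov_add (hq : IsDiscreteQuasigeodesic d n q Λ c) (hd : IsMetricFun d)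
    (hh : IsHyperbolicWith d δ) (hδ : 0 ≤ δ) {w z : X} {t D : ℝ} {k : ℕ}
    (hfar : ∀ l ≤ n, D ≤ virtualDist d w z t (q l)) (hσ : 0 ≤ Λ + c) {i j : ℕ} (hi : i ≤ n)
    (hj : j ≤ n) (hij : |(i : ℝ) - j| ≤ 2 ^ k) :
    D - (Λ + c) / 2 ≤ virtualGromov d w z t (q i) (q j) + δ * k := by
  wlog hle : i ≤ j generalizing i j
  · rw [hd.virtualGromov_comm]
    exact this hj hi (abs_sub_comm (i : ℝ) j ▸ hij) (le_of_not_ge hle)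
  rcases hle.eq_or_lt with rfl | hlt
  · rw [hd.virtualGromov_self]
    linarith [hfar i hi, mul_nonneg hδ k.cast_nonneg]
  · rw [abs_sub_comm, abs_of_pos (sub_pos.2 (Nat.cast_lt.2 hlt)), sub_le_iff_le_add'] at hij
    refine le_add_of_chain hδ (hd.min_virtualGromov_le hh w z t) q k i j hlt (by exact_mod_cast hij)
      fun l _ hlj => ?_
    have hstep := hq.dist_succ_le (hlj.trans_le hj)
    rw [virtualGromov]
    linarith [hfar l (by omega), hfar (l + 1) (by omega)]

/- If the largest distance `D` from a virtual point to the path is attained at height `t`, then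
both endpoints can be replaced, at a bounded cost, by points of the path at distance `O(D)` from
that virtual point. The path joins them in `O(D)` steps outside the ball of radius `D`, while in
a hyperbolic space this takes exponentially many steps. -/
theorem le_mul_add_of_virtualDist_max (hq : IsDiscreteQuasigeodesic d n q Λ c)
    (hd : IsMetricFun d) (hh : IsHyperbolicWith d δ) (hδ : 0 ≤ δ) (hΛ : 0 < Λ) (hc : 0 ≤ c)
    {t D : ℝ} (ht : t ∈ Icc 0 (d (q 0) (q n)))
    (hnear : ∀ s ∈ Icc 0 (d (q 0) (q n)), ∃ i ≤ n, virtualDist d (q 0) (q n) s (q i) ≤ D)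
    (hfar : ∀ i ≤ n, D ≤ virtualDist d (q 0) (q n) t (q i)) {k : ℕ}
    (hk : 6 * Λ * D + Λ * (2 * δ + c) ≤ 2 ^ k) :
    D ≤ δ * k + (2 * δ + (Λ + c) / 2) := by
  have hnear' : ∀ s ∈ Icc 0 (d (q 0) (q n)),
      ∃ a ∈ q '' Iic n, virtualDist d (q 0) (q n) s a ≤ D := by
    simpa only [exists_mem_image, mem_Iic] using hnear
  have hfar' : ∀ a ∈ q '' Iic n, D ≤ virtualDist d (q 0) (q n) t a := by
    simpa only [forall_mem_image, mem_Iic] using hfar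
  obtain ⟨_, ⟨i, hi, rfl⟩, hiD, hleft⟩ := hd.exists_virtualDist_le_and_le_virtualGromov_left ht
    (mem_image_of_mem q (mem_Iic.2 n.zero_le)) hnear' hfar'
  obtain ⟨_, ⟨j, hj, rfl⟩, hjD, hright⟩ :=
    hd.exists_virtualDist_le_and_le_virtualGromov_right ht
      (mem_image_of_mem q (mem_Iic.2 le_rfl)) hnear' hfar'
  have hij : |(i : ℝ) - j| ≤ 2 ^ k := calc
    |(i : ℝ) - j| ≤ Λ * (d (q i) (q j) + c) := hq.abs_sub_le hΛ hi hj
    _ ≤ Λ * (6 * D + 2 * δ + c) := by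
      gcongr
      linarith [hd.dist_le_virtualDist_add hh (q 0) (q n) t (q i) (q j)]
    _ ≤ 2 ^ k := by linarith
  have hmid := hq.le_virtualGromov_add hd hh hδ hfar (by positivity) hi hj hij
  have hends := hd.virtualGromov_left_right ht
  have hδk : 0 ≤ δ * k := by positivity
  rcases min_le_iff.1 (hd.min_virtualGromov_le hh (q 0) (q n) t (q 0) (q i) (q n)) with h | h
  · linarith
  · have hmin := hd.min_virtualGromov_le hh (q 0) (q n) t (q i) (q j) (q n)
    rcases min_le_iff.1 hmin with h' | h' <;> linarith

end IsDiscreteQuasigeodesic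

theorem exists_virtualDist_le_of_isDiscreteQuasigeodesic (hd : IsMetricFun d)
    (hh : IsHyperbolicWith d δ) (hδ : 0 ≤ δ) (hΛ : 0 < Λ) (hc : 0 ≤ c) :
    ∃ D₀, ∀ n q, IsDiscreteQuasigeodesic d n q Λ c → ∀ t ∈ Icc 0 (d (q 0) (q n)),
      ∃ i ≤ n, virtualDist d (q 0) (q n) t (q i) ≤ D₀ := by
  obtain ⟨D₀, hD₀⟩ := exists_le_of_forall_le_two_pow (A := 6 * Λ) (by positivity)
    (Λ * (2 * δ + c)) δ (2 * δ + (Λ + c) / 2)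
  refine ⟨D₀, fun n q hq t ht => ?_⟩
  set f : ℝ → ℝ := fun s => (Finset.range (n + 1)).inf' Finset.nonempty_range_add_one
    fun i => virtualDist d (q 0) (q n) s (q i)
  have hf : Continuous f :=
    Continuous.finset_inf'_apply _ fun i _ => continuous_virtualDist d _ _ (q i)
  have hfi (s : ℝ) : ∃ i ≤ n, virtualDist d (q 0) (q n) s (q i) = f s := by
    obtain ⟨i, hi, heq⟩ := Finset.exists_mem_eq_inf' (Finset.nonempty_range_add_one (n := n))
      fun i => virtualDist d (q 0) (q n) s (q i)
    exact ⟨i, Finset.mem_range_succ_iff.1 hi, heq.symm⟩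
  obtain ⟨s, hs, hmax⟩ := isCompact_Icc.exists_isMaxOn ⟨t, ht⟩ hf.continuousOn
  have hbound : f s ≤ D₀ := hD₀ _ fun k hk => by
    refine hq.le_mul_add_of_virtualDist_max hd hh hδ hΛ hc hs (fun u hu => ?_) (fun i hi => ?_) hk
    · obtain ⟨i, hi, heq⟩ := hfi u
      exact ⟨i, hi, heq.trans_le (hmax hu)⟩
    · exact Finset.inf'_le _ (Finset.mem_range_succ_iff.2 hi)
  obtain ⟨i, hi, heq⟩ := hfi t
  exact ⟨i, hi, heq.trans_le ((hmax ht).trans hbound)⟩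

end Morse

/-! ### From hyperbolicity to Ancona's inequality -/

section Quasiruler

variable {X : Type*} {d : X → X → ℝ} {δ Λ c : ℝ} {n : ℕ} {q : ℕ → X}

theorem IsMetricFun.sub_le_gromov_of_virtualDist_le (hd : IsMetricFun d) {w z a : X} {t D : ℝ}
    (ha : virtualDist d w z t a ≤ D) : t - D ≤ gromov d w z a := by
  have hza := (dist_right_le_virtualDist_add d w z t a).trans (add_le_add_left ha _)
  have htri := hd.triangle w a z
  unfold gromov
  linarith [hd.symm a z, hd.symm z w, hd.symm a w]

theorem IsMetricFun.dist_le_of_virtualDist_gromov_le (hd : IsMetricFun d)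
    (hh : IsHyperbolicWith d δ) {w x y a b : X} {D : ℝ} (hδ : 0 ≤ δ) (hD : 0 ≤ D)
    (ha : virtualDist d w x (gromov d w x y) a ≤ D)
    (hb : virtualDist d w y (gromov d w x y) b ≤ D) : d a b ≤ 4 * D + 4 * δ := by
  have hwa := (dist_left_le_virtualDist_add d w x _ a).trans (add_le_add_left ha _)
  have hwb := (dist_left_le_virtualDist_add d w y _ b).trans (add_le_add_left hb _)
  have hxa := hd.sub_le_gromov_of_virtualDist_le ha
  have hyb := hd.sub_le_gromov_of_virtualDist_le hb
  have hya : gromov d w x y - D - δ ≤ gromov d w y a := by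
    rcases hh.gromov_le_or w x y a with h | h <;> linarith
  have hab : gromov d w x y - D - 2 * δ ≤ gromov d w a b := by
    rcases hh.gromov_le_or w y a b with h | h <;> linarith
  rw [gromov.eq_def d w a b] at hab
  linarith [hd.symm a w, hd.symm b w]

namespace IsDiscreteQuasigeodesic

theorem suffix (hq : IsDiscreteQuasigeodesic d n q Λ c) {i : ℕ} (hi : i ≤ n) :
    IsDiscreteQuasigeodesic d (n - i) (fun j => q (i + j)) Λ c := fun a b ha hb => by
  simpa using hq (i + a) (i + b) (by omega) (by omega)

theorem prefix_reverse (hq : IsDiscreteQuasigeodesic d n q Λ c) {i : ℕ} (hi : i ≤ n) :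
    IsDiscreteQuasigeodesic d i (fun j => q (i - j)) Λ c := fun a b ha hb => by
  have h := hq (i - a) (i - b) (by omega) (by omega)
  rwa [Nat.cast_sub ha, Nat.cast_sub hb, sub_sub_sub_cancel_left, abs_sub_comm] at h

/- The two halves of the path both pass near the branching point of the triangle with vertices
`q 0`, `q i`, `q n`. Two points of a quasigeodesic that are close to each other are separated by a
short piece of it, so `q i`, which lies between them, is near the branching point too. -/
theorem exists_gromov_le (hd : IsMetricFun d) (hh : IsHyperbolicWith d δ) (hδ : 0 ≤ δ)
    (hΛ : 0 < Λ) (hc : 0 ≤ c) :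
    ∃ τ, ∀ n q, IsDiscreteQuasigeodesic d n q Λ c → ∀ i ≤ n,
      gromov d (q i) (q 0) (q n) ≤ τ := by
  obtain ⟨D, hmorse⟩ := exists_virtualDist_le_of_isDiscreteQuasigeodesic hd hh hδ hΛ hc
  refine ⟨D + (Λ * (Λ * (4 * D + 4 * δ + c)) + c), fun n q hq i hi => ?_⟩
  have hT := hd.gromov_nonneg (q i) (q 0) (q n)
  obtain ⟨k, hk, hkD⟩ := hmorse i _ (hq.prefix_reverse hi) (gromov d (q i) (q 0) (q n))
    ⟨hT, by simpa using hd.gromov_le_dist (q i) (q 0) (q n)⟩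
  obtain ⟨j, hj, hjD⟩ := hmorse (n - i) _ (hq.suffix hi) (gromov d (q i) (q 0) (q n))
    ⟨hT, by simpa [hi, hd.gromov_comm] using hd.gromov_le_dist (q i) (q n) (q 0)⟩
  simp only [Nat.sub_zero, Nat.sub_self] at hkD
  simp only [add_zero, Nat.add_sub_cancel' hi] at hjD
  have hclose := hd.dist_le_of_virtualDist_gromov_le hh hδ
    ((hd.virtualDist_nonneg _).trans hkD) hkD hjD
  have hjk := hq.abs_sub_le hΛ (i := i - k) (j := i + j) (by omega) (by omega)
  rw [Nat.cast_sub hk, Nat.cast_add, abs_sub_comm, abs_of_nonneg (by linarith)] at hjk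
  have hj : (j : ℝ) ≤ Λ * (4 * D + 4 * δ + c) := calc
    (j : ℝ) ≤ Λ * (d (q (i - k)) (q (i + j)) + c) := by linarith [k.cast_nonneg (α := ℝ)]
    _ ≤ Λ * (4 * D + 4 * δ + c) := by gcongr
  have hstep : d (q i) (q (i + j)) ≤ Λ * j + c := by
    simpa using (hq i (i + j) hi (by omega)).2
  have hbase := hd.sub_le_gromov_of_virtualDist_le hjD
  rw [hd.gromov_comm (q i) (q n)] at hbase
  linarith [hd.gromov_le_dist (q i) (q (i + j)) (q n), mul_le_mul_of_nonneg_left hj hΛ.le]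

end IsDiscreteQuasigeodesic

end Quasiruler

section Ancona

variable {S : Finset G} {Λ c : ℝ}

theorem IsWordGeodesic.isDiscreteQuasigeodesic {d : G → G → ℝ} {n : ℕ} {p : ℕ → G}
    (hp : IsWordGeodesic S n p) (hqi : QIEmbed (wordDist S) d id Λ c) :
    IsDiscreteQuasigeodesic d n p Λ c :=
  fun i j hi hj => hp i j hi hj ▸ hqi (p i) (p j)

theorem IsHyperbolic.isRuledByWordGeodesics {d : G → G → ℝ} (hh : IsHyperbolic d)
    (hd : IsMetricFun d) (hΛ : 0 < Λ) (hc : 0 ≤ c) (hqi : QIEmbed (wordDist S) d id Λ c) :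
    IsRuledByWordGeodesics S d := by
  obtain ⟨δ, hδ, hh⟩ := hh
  obtain ⟨τ, hτ⟩ := IsDiscreteQuasigeodesic.exists_gromov_le hd hh hδ hΛ hc
  refine fun r _ => ⟨τ + (Λ * r + c), ?_⟩
  rintro _ _ v ⟨n, p, hp, rfl, rfl, i, hi, hv⟩
  calc gromov d v (p 0) (p n)
      ≤ gromov d (p i) (p 0) (p n) + d v (p i) := hd.gromov_le_gromov_add_dist_base _ _ _ _
    _ ≤ τ + (Λ * r + c) :=
      add_le_add (hτ n p (hp.isDiscreteQuasigeodesic hqi) i hi)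
        ((hqi v (p i)).2.trans (by gcongr))

theorem isRuledByWordGeodesics_greenDist_iff {μ : G → ℝ} (hpos : ∀ x y, 0 < hitProb μ x y)
    (hsymm : ∀ x y, greenDist μ x y = greenDist μ y x) :
    IsRuledByWordGeodesics S (greenDist μ) ↔
      ∀ r : ℝ, 0 ≤ r → ∃ C : ℝ, 0 < C ∧ ∀ x y v : G, NearWordGeodesic S x y v r →
        hitProb μ x y ≤ C * hitProb μ x v * hitProb μ v y := by
  have hancona (K : ℝ) (x y v : G) : gromov (greenDist μ) v x y ≤ K ↔
      hitProb μ x y ≤ Real.exp (2 * K) * hitProb μ x v * hitProb μ v y := by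
    have hexp (x y : G) : hitProb μ x y = Real.exp (-greenDist μ x y) := by
      rw [greenDist, neg_neg, Real.exp_log (hpos x y)]
    rw [hexp, hexp x v, hexp v y, ← Real.exp_add, ← Real.exp_add, Real.exp_le_exp, gromov,
      hsymm y v]
    constructor <;> intro h <;> linarith
  refine forall₂_congr fun r _ => ⟨?_, ?_⟩
  · rintro ⟨K, hK⟩
    exact ⟨Real.exp (2 * K), Real.exp_pos _, fun x y v hv => (hancona K x y v).1 (hK x y v hv)⟩
  · rintro ⟨C, hC, hle⟩
    refine ⟨Real.log C / 2, fun x y v hv => (hancona _ x y v).2 ?_⟩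
    rw [mul_div_cancel₀ _ two_ne_zero, Real.exp_log hC]
    exact hle x y v hv

theorem QIEmbed.symm_id {X : Type*} {dX dY : X → X → ℝ} (hqi : QIEmbed dX dY id Λ c)
    (hΛ : 1 ≤ Λ) (hc : 0 ≤ c) : QIEmbed dY dX id Λ (Λ * c) := fun x y => by
  have hΛ0 : 0 < Λ := one_pos.trans_le hΛ
  obtain ⟨hlower, hupper⟩ := hqi x y
  refine ⟨?_, ?_⟩
  · rw [sub_le_iff_le_add, div_le_iff₀' hΛ0]
    simp only [id] at hupper ⊢
    nlinarith [mul_nonneg (sub_nonneg.2 (one_le_pow₀ hΛ (n := 2))) hc]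
  · rw [sub_le_iff_le_add, div_le_iff₀' hΛ0, mul_add] at hlower
    exact hlower

theorem QIEmbed.quasiIsometric_symm_id {X : Type*} {dX dY : X → X → ℝ}
    (hqi : QIEmbed dX dY id Λ c) (hdX : IsMetricFun dX) (hΛ : 1 ≤ Λ) (hc : 0 ≤ c) :
    QuasiIsometric dY dX :=
  ⟨id, Λ, Λ * c, 0, hΛ, by positivity, le_rfl, hqi.symm_id hΛ hc,
    fun y => ⟨y, (hdX.refl y).le⟩⟩

end Ancona

/-- **Theorem 1.1(i) (Blachère–Haïssinsky–Mathieu).**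
Let `Γ` be a non-elementary hyperbolic group and `μ` a symmetric probability measure whose
support generates `Γ` and which has an exponential moment.  Then the Green metric `d_G`
belongs to `𝒟(Γ)` if and only if Ancona's inequality
`F(x,y) ≤ C(r) F(x,v) F(v,y)` holds whenever `v` is within distance `r` of a word geodesic
segment between `x` and `y`. -/
theorem green_metric_memD_iff_ancona
    {G : Type*} [Group G] (hG : NonElemHyperbolic G)
    (μ : G → ℝ) (hprob : IsProbDensity μ) (hsymm : IsSymmetric μ) (hgen : GeneratesSupp μ)
    (S : Finset G) (hS : Generates S)
    (hexp : HasExpMoment (wordDist S) μ) :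
    MemD (greenDist μ) ↔
      ∀ r : ℝ, 0 ≤ r → ∃ C : ℝ, 0 < C ∧
        ∀ x y v : G, NearWordGeodesic S x y v r →
          hitProb μ x y ≤ C * hitProb μ x v * hitProb μ v y := by
  have hfin := egreen_one_ne_top hG hS hprob hgen hexp
  have hd := isInvMetric_greenDist hprob.1 hsymm hgen hfin
  obtain ⟨Λ, c, hΛ, hc, hqi⟩ := exists_qiEmbed_greenDist hG hS hprob hsymm hgen hexp
  rw [← isRuledByWordGeodesics_greenDist_iff (hitProb_pos hprob.1 hsymm hgen hfin) hd.symm]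
  constructor
  · rintro ⟨-, -, hhyp, -⟩
    exact hhyp.isRuledByWordGeodesics hd.toIsMetricFun (one_pos.trans_le hΛ) hc hqi
  · intro hruled
    exact ⟨hd.toIsMetricFun, hd.leftInvariant,
      hruled.isHyperbolic hd.toIsMetricFun hS (hG.2.2 S hS).1, S, hS,
      hqi.quasiIsometric_symm_id (isInvMetric_wordDist hS).toIsMetricFun hΛ hc⟩

end GHM
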